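/- arXiv:1409.4379 — 13 statements merged into one kernel-verified Lean document; each statement's English description precedes it below -/
import Mathlib

section
/- Let N ≥ 3 be an integer. There exists a finite family of univariate real polynomials h_1, …, h_m, each of degree at most ⌈N/4⌉, such that for every i ∈ {1, …, N}, cos(π/N) − cos(θ_i) = Σ_{j=1}^m h_j(cos θ_i)², where θ_i = (2i−1)π/N. (That is, the facet-defining linear function ℓ(x,y) = cos(π/N) − x of the regular N-gon agrees with a sum of squares of polynomials of degree at most ⌈N/4⌉ on the vertices of the regular N-gon.) -/
/-!
Write `t₁ = cos (π/N)`. On the vertices, `t₁ - t` may be modified by any multiple of a polynomial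
`F` vanishing at all abscissae `cos ((2k+1)π/N)`. Let `F` be the monic polynomial with these
`⌈N/2⌉` simple roots and, if `⌈N/2⌉` is odd, one further root at `-1`, so that `F` has even degree
`2⌈N/4⌉`. Factor `F = (t - t₁) G`; then `p = t₁ - t + F / G(t₁)` has a double root at `t₁`, and it
is nonnegative on all of `ℝ` (`nonneg_core`):

* for `t ≥ t₁`, since `G` is a product of nonnegative increasing factors there;
* for `t ≤ -1`, since `F` has an even number of factors, all nonpositive;
* for `t = cos 2x` in `[-1, t₁]`, since `F(cos 2x) = K cos^m x cos Nx` (`prod_node_eq`, from the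
  Chebyshev polynomials); with `α = π/(2N)` one has `|cos Nx| = |sin N(x-α)| ≤ N sin (x-α)`, while
  `t₁ - t = 2 sin (x+α) sin (x-α) ≥ 2 sin 2α sin (x-α)`.

A nonnegative univariate polynomial of degree at most `2n` is a sum of squares of polynomials of
degree at most `n` (`exists_sum_sq_of_nonneg`), which applies to `p`.
-/

open Real Polynomial

/-! ### Nonnegative univariate polynomials are sums of squares -/

/-- A univariate real polynomial of degree at most `2n` that is nonnegative on `ℝ` is a sum of
squares of polynomials of degree at most `n`: subtracting its minimum leaves a double root,
which is divided out. -/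
lemma exists_sum_sq_of_nonneg (n : ℕ) : ∀ p : ℝ[X], p.natDegree ≤ 2 * n →
    (∀ x, 0 ≤ p.eval x) →
    ∃ (m : ℕ) (h : Fin m → ℝ[X]), (∀ j, (h j).natDegree ≤ n) ∧ p = ∑ j, (h j) ^ 2 := by
  induction n with
  | zero =>
    intro p hp h0
    obtain ⟨c, rfl⟩ := Polynomial.natDegree_eq_zero.mp (Nat.le_zero.mp hp)
    have hc : 0 ≤ c := by simpa using h0 0
    refine ⟨1, fun _ => C √c, fun _ => by simp, ?_⟩
    simp [← C_pow, Real.sq_sqrt hc]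
  | succ n ih =>
    intro p hp h0
    obtain ⟨a, ha⟩ := p.exists_forall_norm_le
    have hmin : ∀ y, p.eval a ≤ p.eval y := fun y => by
      simpa [abs_of_nonneg (h0 a), abs_of_nonneg (h0 y)] using ha y
    have hder : p.derivative.eval a = 0 := by
      have hloc : IsLocalMin (fun y => p.eval y) a := Filter.Eventually.of_forall hmin
      simpa using hloc.deriv_eq_zero
    obtain ⟨s, hs⟩ : (X - C a) ∣ p - C (p.eval a) := dvd_iff_isRoot.mpr (by simp)
    have hsa : s.eval a = 0 := by
      have := congrArg (fun r : ℝ[X] => r.derivative.eval a) hs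
      simpa [hder] using this.symm
    obtain ⟨q, rfl⟩ : (X - C a) ∣ s := dvd_iff_isRoot.mpr hsa
    have hpq : p = C (p.eval a) + (X - C a) ^ 2 * q := by linear_combination hs
    have hq : ∀ y, 0 ≤ q.eval y := by
      have hne : ∀ y, y ≠ a → 0 ≤ q.eval y := by
        intro y hy
        have h1 := hmin y
        have h2 : p.eval y = p.eval a + (y - a) ^ 2 * q.eval y := by
          conv_lhs => rw [hpq]
          simp
        have h3 : 0 < (y - a) ^ 2 := by
          have := sub_ne_zero.mpr hy
          positivity
        exact nonneg_of_mul_nonneg_right (by linarith : 0 ≤ (y - a) ^ 2 * q.eval y) h3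
      have hcl : IsClosed {y : ℝ | 0 ≤ q.eval y} := isClosed_le continuous_const q.continuous
      have hd : Dense {y : ℝ | 0 ≤ q.eval y} := (dense_compl_singleton a).mono hne
      intro y
      have := hd.closure_eq ▸ Set.mem_univ y
      rwa [hcl.closure_eq] at this
    have hdeg : q.natDegree ≤ 2 * n := by
      by_cases hq0 : q = 0
      · simp [hq0]
      have h1 : ((X - C a) ^ 2 * q).natDegree = 2 + q.natDegree := by
        rw [natDegree_mul (pow_ne_zero _ (X_sub_C_ne_zero a)) hq0]
        simp
      have h2 : ((X - C a) ^ 2 * q).natDegree = p.natDegree := by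
        conv_rhs => rw [hpq]
        simp
      omega
    obtain ⟨m, h, hh, hsum⟩ := ih q hdeg hq
    refine ⟨m + 1, Fin.cons (C √(p.eval a)) (fun j => (X - C a) * h j), ?_, ?_⟩
    · intro j
      refine Fin.cases ?_ (fun j => ?_) j
      · simp
      · simp only [Fin.cons_succ]
        refine natDegree_mul_le.trans ?_
        have := hh j
        simp only [natDegree_X_sub_C]
        omega
    · rw [Fin.sum_univ_succ]
      simp only [Fin.cons_zero, Fin.cons_succ, mul_pow, ← Finset.mul_sum, ← hsum, ← C_pow,
        Real.sq_sqrt (h0 a)]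
      exact hpq

/-! ### The nodes and their nodal polynomial -/

lemma abs_sin_nat_mul_le (n : ℕ) (x : ℝ) : |sin (n * x)| ≤ n * |sin x| := by
  induction n with
  | zero => simp
  | succ n ih =>
    have h : ((n + 1 : ℕ) : ℝ) * x = n * x + x := by push_cast; ring
    rw [h, sin_add]
    refine (abs_add_le _ _).trans ?_
    rw [abs_mul, abs_mul]
    have h1 := mul_le_of_le_one_right (abs_nonneg (sin (n * x))) (abs_cos_le_one x)
    have h2 := mul_le_of_le_one_left (abs_nonneg (sin x)) (abs_cos_le_one (n * x))
    push_cast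
    linarith

/-- The nodes `cos((2k+1)π/N)`, the abscissae of the vertices of the regular `N`-gon. -/
noncomputable def node (N k : ℕ) : ℝ := cos ((2 * (k : ℝ) + 1) * π / N)

/-- With `b` the parity of `N` and `M = ⌈N/2⌉`, the `M` distinct abscissae are the roots of the
degree-`M` polynomial `T_M + b T_{M-1}`, whose value at `cos 2x` is `2^b cos^b x cos Nx`. -/
lemma prod_node_eq (N M b : ℕ) (hN : 3 ≤ N) (hb : b ≤ 1) (hNM : N + b = 2 * M) :
    ∃ K : ℝ, 0 < K ∧ ∀ x : ℝ,
      ∏ k ∈ Finset.range M, (cos (2 * x) - node N k) = K * cos x ^ b * cos (N * x) := by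
  have hN0 : (0 : ℝ) < N := by exact_mod_cast (by omega : 0 < N)
  have hNr : (N : ℝ) + b = 2 * M := by exact_mod_cast hNM
  set Q : ℝ[X] := Chebyshev.T ℝ (M : ℤ) + C (b : ℝ) * Chebyshev.T ℝ ((M - 1 : ℕ) : ℤ) with hQ
  have hQcos : ∀ x, Q.eval (cos (2 * x)) = 2 ^ b * cos x ^ b * cos (N * x) := by
    intro x
    simp only [hQ, eval_add, eval_mul, eval_C, Chebyshev.T_real_cos]
    interval_cases b
    · simp only [Nat.cast_zero, add_zero] at hNr
      rw [hNr]
      simp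
      ring_nf
    · have h1 : ((M - 1 : ℕ) : ℝ) = M - 1 := by
        rw [Nat.cast_sub (by omega)]; simp
      have h2 : (N : ℝ) = 2 * M - 1 := by push_cast at hNr; linarith
      have e1 : (M : ℝ) * (2 * x) = N * x + x := by rw [h2]; ring
      have e2 : ((M : ℝ) - 1) * (2 * x) = N * x - x := by rw [h2]; ring
      simp only [Int.cast_natCast, h1, e1, e2, cos_add, cos_sub]
      push_cast
      ring
  have hlt : (C (b : ℝ) * Chebyshev.T ℝ ((M - 1 : ℕ) : ℤ)).degree
      < (Chebyshev.T ℝ (M : ℤ)).degree := by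
    refine degree_lt_degree ((natDegree_C_mul_le _ _).trans_lt ?_)
    rw [Chebyshev.natDegree_T, Chebyshev.natDegree_T]
    simp only [Int.natAbs_natCast]
    omega
  have hQdeg : Q.natDegree = M := by
    rw [hQ, natDegree_add_eq_left_of_degree_lt hlt, Chebyshev.natDegree_T]
    simp
  have hQlc : 0 < Q.leadingCoeff := by
    rw [hQ, leadingCoeff_add_of_degree_lt' hlt, Chebyshev.leadingCoeff_T]
    positivity
  have hQ0 : Q ≠ 0 := by
    rintro h
    simp [h] at hQlc
  have hinj : Set.InjOn (node N) (Finset.range M) := by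
    intro k hk l hl hkl
    simp only [Finset.coe_range, Set.mem_Iio] at hk hl
    have hmem : ∀ j : ℕ, j < M → (2 * (j : ℝ) + 1) * π / N ∈ Set.Icc 0 π := by
      intro j hj
      refine ⟨by positivity, ?_⟩
      rw [div_le_iff₀ hN0, mul_comm π]
      gcongr
      exact_mod_cast (by omega : 2 * j + 1 ≤ N)
    have := injOn_cos (hmem k hk) (hmem l hl) hkl
    field_simp at this
    exact_mod_cast (by linarith : (k : ℝ) = l)
  have hroots : Q.roots = ((Finset.range M).image (node N)).val := by
    refine roots_eq_of_natDegree_le_card_of_ne_zero ?_ ?_ hQ0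
    · intro t ht
      obtain ⟨k, -, rfl⟩ := Finset.mem_image.mp ht
      have : node N k = cos (2 * ((2 * (k : ℝ) + 1) * π / (2 * N))) := by
        unfold node
        congr 1
        field_simp
      rw [this, hQcos]
      have : cos ((N : ℝ) * ((2 * (k : ℝ) + 1) * π / (2 * N))) = 0 := by
        rw [cos_eq_zero_iff]
        refine ⟨k, ?_⟩
        push_cast
        field_simp
      rw [this, mul_zero]
    · rw [Finset.card_image_of_injOn hinj, hQdeg, Finset.card_range]
  have hfac : Q = C Q.leadingCoeff * ∏ k ∈ Finset.range M, (X - C (node N k)) := by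
    have hcard : Multiset.card Q.roots = Q.natDegree := by
      rw [hroots, hQdeg, Finset.card_val, Finset.card_image_of_injOn hinj, Finset.card_range]
    conv_lhs => rw [← C_leadingCoeff_mul_prod_multiset_X_sub_C hcard, hroots]
    congr 1
    exact Finset.prod_image (f := fun a => X - C a) hinj
  refine ⟨2 ^ b / Q.leadingCoeff, by positivity, fun x => ?_⟩
  have h1 := hQcos x
  rw [hfac] at h1
  simp only [eval_mul, eval_C, eval_prod, eval_sub, eval_X] at h1
  rw [div_mul_eq_mul_div, div_mul_eq_mul_div, eq_div_iff hQlc.ne', mul_comm]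
  exact h1

lemma node_le_node_zero {N M b : ℕ} (hN : 3 ≤ N) (hb : b ≤ 1) (hNM : N + b = 2 * M) {k : ℕ}
    (hk : k < M) : node N k ≤ node N 0 := by
  have hN0 : (0 : ℝ) < N := by exact_mod_cast (by omega : 0 < N)
  unfold node
  apply cos_le_cos_of_nonneg_of_le_pi
  · positivity
  · rw [div_le_iff₀ hN0, mul_comm π]
    gcongr
    exact_mod_cast (by omega : 2 * k + 1 ≤ N)
  · gcongr
    simp

/-- The monic polynomial with a simple root at each abscissa and, for `e = 1`, one more root
at `-1`. -/
noncomputable def nodal (N M e : ℕ) : ℝ[X] :=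
  (∏ k ∈ Finset.range M, (X - C (node N k))) * (X + 1) ^ e

/-- The cofactor of the root `node N 0` in `nodal N (L + 1) e`. -/
noncomputable def cofactor (N L e : ℕ) : ℝ[X] :=
  (∏ k ∈ Finset.range L, (X - C (node N (k + 1)))) * (X + 1) ^ e

lemma nodal_eq (N L e : ℕ) : nodal N (L + 1) e = (X - C (node N 0)) * cofactor N L e := by
  rw [nodal, cofactor, Finset.prod_range_succ']
  ring

lemma neg_one_le_node (N k : ℕ) : -1 ≤ node N k := neg_one_le_cos _

lemma natDegree_nodal_le (N M e : ℕ) : (nodal N M e).natDegree ≤ M + e := by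
  unfold nodal
  refine natDegree_mul_le.trans (add_le_add ?_ ?_)
  · refine (natDegree_prod_le _ _).trans ?_
    simp
  · refine natDegree_pow_le.trans ?_
    have : (X + 1 : ℝ[X]).natDegree = 1 := by simpa using natDegree_X_add_C (1 : ℝ)
    rw [this, mul_one]

lemma nodal_nonneg_of_le {N M e : ℕ} (he : Even (M + e)) {t : ℝ} (ht : t ≤ -1) :
    0 ≤ (nodal N M e).eval t := by
  have h1 : ∏ k ∈ Finset.range M, (t - node N k)
      = (-1) ^ M * ∏ k ∈ Finset.range M, (node N k - t) := by
    rw [← Finset.card_range M, ← Finset.prod_const, Finset.card_range, ← Finset.prod_mul_distrib]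
    exact Finset.prod_congr rfl fun _ _ => by ring
  have h2 : (t + 1) ^ e = (-1) ^ e * (-1 - t) ^ e := by
    rw [← mul_pow]
    ring
  have h3 : (nodal N M e).eval t
      = (-1) ^ (M + e) * ((∏ k ∈ Finset.range M, (node N k - t)) * (-1 - t) ^ e) := by
    simp only [nodal, eval_mul, eval_prod, eval_sub, eval_X, eval_C, eval_pow, eval_add, eval_one]
    rw [h1, h2]
    ring
  rw [h3, he.neg_one_pow, one_mul]
  refine mul_nonneg (Finset.prod_nonneg fun k _ => ?_) (pow_nonneg (by linarith) _)
  linarith [neg_one_le_node N k]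

lemma cofactor_mono {N L b e : ℕ} (hN : 3 ≤ N) (hb : b ≤ 1) (hNM : N + b = 2 * (L + 1)) {t : ℝ}
    (ht : node N 0 ≤ t) : (cofactor N L e).eval (node N 0) ≤ (cofactor N L e).eval t := by
  simp only [cofactor, eval_mul, eval_prod, eval_sub, eval_X, eval_C, eval_pow, eval_add, eval_one]
  have h0 : ∀ k ∈ Finset.range L, 0 ≤ node N 0 - node N (k + 1) := fun k hk => by
    have := Finset.mem_range.mp hk
    linarith [node_le_node_zero hN hb hNM (k := k + 1) (by omega)]
  have h1 := neg_one_le_node N 0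
  refine mul_le_mul (Finset.prod_le_prod h0 fun _ _ => by linarith)
    (pow_le_pow_left₀ (by linarith) (by linarith) _) (pow_nonneg (by linarith) _)
    (Finset.prod_nonneg fun k hk => (h0 k hk).trans (by linarith))

/-! ### Nonnegativity of the interpolant -/

/-- `ℓ + nodal / G(t₁) ≥ 0` on all of `ℝ`, up to clearing the denominator `G(t₁) > 0`, where
`t₁ = cos (π/N)` and `G` is the cofactor of `t₁`; moreover `nodal` vanishes at `cos 2x` whenever
`cos Nx = 0`, in particular at every vertex abscissa. -/
lemma nonneg_core {N L b e : ℕ} (hN : 3 ≤ N) (hb : b ≤ 1) (hNM : N + b = 2 * (L + 1))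
    (he : Even (L + 1 + e)) :
    0 < (cofactor N L e).eval (node N 0) ∧
    (∀ x : ℝ, cos (N * x) = 0 → (nodal N (L + 1) e).eval (cos (2 * x)) = 0) ∧
    ∀ t : ℝ, 0 ≤ (cofactor N L e).eval (node N 0) * (node N 0 - t)
      + (nodal N (L + 1) e).eval t := by
  obtain ⟨K₀, hK₀, hprod⟩ := prod_node_eq N (L + 1) b hN hb hNM
  have hN3 : (3 : ℝ) ≤ N := by exact_mod_cast hN
  have hN0 : (0 : ℝ) < N := by linarith
  -- `t₁ = cos 2α` with `Nα = π/2`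
  set α : ℝ := π / (2 * N) with hα
  have hNα : N * α = π / 2 := by rw [hα]; field_simp
  have hα0 : 0 < α := by positivity
  have hα6 : 3 * α ≤ π / 2 := by rw [← hNα]; gcongr
  have ht1 : node N 0 = cos (2 * α) := by
    unfold node
    congr 1
    rw [hα]
    push_cast
    field_simp
    ring
  obtain ⟨K, hK, hF⟩ : ∃ K : ℝ, 0 < K ∧ ∀ x : ℝ, (nodal N (L + 1) e).eval (cos (2 * x))
      = K * cos x ^ (b + 2 * e) * cos (N * x) := by
    refine ⟨K₀ * 2 ^ e, by positivity, fun x => ?_⟩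
    simp only [nodal, eval_mul, eval_prod, eval_sub, eval_X, eval_C, eval_pow, eval_add, eval_one]
    rw [hprod, show cos (2 * x) + 1 = 2 * cos x ^ 2 by rw [cos_two_mul]; ring, mul_pow, ← pow_mul,
      pow_add]
    ring
  set m := b + 2 * e
  set G := (cofactor N L e).eval (node N 0) with hG
  have hs2 : 0 < sin (2 * α) := sin_pos_of_pos_of_lt_pi (by linarith) (by linarith)
  have hc : 0 < cos α := cos_pos_of_mem_Ioo ⟨by linarith, by linarith⟩
  -- differentiating `hF` at `α` gives the value of the cofactor at its root
  have hGval : G * (2 * sin (2 * α)) = K * cos α ^ m * N := by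
    have d1 : HasDerivAt (fun x : ℝ => (nodal N (L + 1) e).eval (cos (2 * x)))
        ((nodal N (L + 1) e).derivative.eval (cos (2 * α)) * (-sin (2 * α) * 2)) α := by
      have hin : HasDerivAt (fun x : ℝ => cos (2 * x)) (-sin (2 * α) * 2) α := by
        have := ((hasDerivAt_id α).const_mul 2).cos
        simpa using this
      exact ((nodal N (L + 1) e).hasDerivAt (cos (2 * α))).comp α hin
    have d2 : HasDerivAt (fun x : ℝ => K * cos x ^ m * cos (N * x))
        (K * cos α ^ m * (-sin (N * α) * N)) α := by
      have hin : HasDerivAt (fun x : ℝ => cos (N * x)) (-sin (N * α) * N) α := by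
        have := ((hasDerivAt_id α).const_mul (N : ℝ)).cos
        simpa using this
      have hpow := ((hasDerivAt_cos α).pow m).const_mul K
      have := hpow.mul hin
      rw [hNα, cos_pi_div_two, mul_zero, zero_add] at this
      rw [hNα]
      exact this
    have := d1.unique ((funext hF) ▸ d2)
    have hd : (nodal N (L + 1) e).derivative.eval (cos (2 * α)) = G := by
      rw [nodal_eq, hG, ht1]
      simp
    rw [hd, hNα, sin_pi_div_two] at this
    linarith
  have hGpos : 0 < G := by
    have : 0 < G * (2 * sin (2 * α)) := by rw [hGval]; positivity
    exact pos_of_mul_pos_left this (by linarith)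
  refine ⟨hGpos, fun x hx => by rw [hF, hx, mul_zero], fun t => ?_⟩
  rcases le_total (node N 0) t with h | h
  · have h1 := cofactor_mono (e := e) hN hb hNM h
    rw [nodal_eq]
    simp only [eval_mul, eval_sub, eval_X, eval_C]
    nlinarith
  rcases le_total t (-1) with h' | h'
  · have := nodal_nonneg_of_le (N := N) he h'
    have := mul_nonneg hGpos.le (sub_nonneg.mpr h)
    linarith
  -- on `[-1, t₁]`, put `t = cos 2x` with `α ≤ x ≤ π/2`
  obtain ⟨x, hαx, hxπ, rfl⟩ : ∃ x, α ≤ x ∧ x ≤ π / 2 ∧ cos (2 * x) = t := by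
    have htc : cos (arccos t) = t := cos_arccos h' (h.trans (cos_le_one _))
    refine ⟨arccos t / 2, ?_, by linarith [arccos_le_pi t], ?_⟩
    · have := arccos_le_arccos h
      rw [ht1, arccos_cos (by linarith) (by linarith)] at this
      linarith
    · rw [mul_div_cancel₀ _ (two_ne_zero), htc]
  have hcx : 0 ≤ cos x := cos_nonneg_of_mem_Icc ⟨by linarith, hxπ⟩
  have hcle : cos x ≤ cos α := cos_le_cos_of_nonneg_of_le_pi hα0.le (by linarith) hαx
  have hsd : 0 ≤ sin (x - α) := sin_nonneg_of_nonneg_of_le_pi (by linarith) (by linarith)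
  have hcosN : |cos (N * x)| ≤ N * sin (x - α) := by
    have : cos (N * x) = -sin (N * (x - α)) := by
      rw [← cos_add_pi_div_two, ← hNα]
      ring_nf
    rw [this, abs_neg]
    simpa [abs_of_nonneg hsd] using abs_sin_nat_mul_le N (x - α)
  have hsin : sin (2 * α) ≤ sin (x + α) := by
    -- `2α ≤ x + α ≤ π - 2α`, where the last bound is `N ≥ 3`
    rw [← cos_pi_div_two_sub, ← cos_pi_div_two_sub, ← cos_abs (π / 2 - (x + α))]
    refine cos_le_cos_of_nonneg_of_le_pi (abs_nonneg _) (by linarith) ?_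
    rw [abs_le]
    constructor <;> linarith
  have hdiff : cos (2 * α) - cos (2 * x) = 2 * sin (x + α) * sin (x - α) := by
    have e1 := cos_sub (x + α) (x - α)
    have e2 := cos_add (x + α) (x - α)
    rw [show (x + α) - (x - α) = 2 * α by ring] at e1
    rw [show (x + α) + (x - α) = 2 * x by ring] at e2
    rw [e1, e2]
    ring
  have hFabs : |(nodal N (L + 1) e).eval (cos (2 * x))| ≤ K * cos α ^ m * (N * sin (x - α)) := by
    rw [hF, abs_mul, abs_of_nonneg (by positivity : 0 ≤ K * cos x ^ m)]
    gcongr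
  have hlow : K * cos α ^ m * (N * sin (x - α)) ≤ G * (node N 0 - cos (2 * x)) := by
    rw [ht1, hdiff, ← mul_assoc, ← hGval]
    have := mul_le_mul_of_nonneg_left hsin (by positivity : 0 ≤ 2 * G * sin (x - α))
    linarith
  linarith [neg_abs_le ((nodal N (L + 1) e).eval (cos (2 * x)))]

/-- The facet-defining linear function `ℓ(x,y) = cos(π/N) − x` of the regular `N`-gon agrees
with a sum of squares of univariate polynomials of degree at most `⌈N/4⌉` on the vertices. -/
theorem thetaRank_ub (N : ℕ) (hN : 3 ≤ N) :
    ∃ (m : ℕ) (h : Fin m → Polynomial ℝ),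
      (∀ j, (h j).natDegree ≤ ⌈(N : ℚ) / 4⌉₊) ∧
      ∀ i ∈ Finset.Icc 1 N,
        Real.cos (π / N) - Real.cos ((2 * (i : ℝ) - 1) * π / N) =
          ∑ j, ((h j).eval (Real.cos ((2 * (i : ℝ) - 1) * π / N))) ^ 2 := by
  obtain ⟨b, L, e, hb, hNM, he1, he⟩ : ∃ b L e : ℕ, b ≤ 1 ∧ N + b = 2 * (L + 1) ∧ e ≤ 1 ∧
      Even (L + 1 + e) := by
    refine ⟨N % 2, (N + 1) / 2 - 1, ((N + 1) / 2) % 2, by omega, by omega, by omega, ?_⟩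
    rw [Nat.even_iff]
    omega
  have hdeg : L + 1 + e ≤ 2 * ⌈(N : ℚ) / 4⌉₊ := by
    have h1 : (N : ℚ) ≤ 4 * (⌈(N : ℚ) / 4⌉₊ : ℚ) := by linarith [Nat.le_ceil ((N : ℚ) / 4)]
    have h2 : N ≤ 4 * ⌈(N : ℚ) / 4⌉₊ := by exact_mod_cast h1
    rw [Nat.even_iff] at he
    omega
  have hN0 : (N : ℝ) ≠ 0 := by exact_mod_cast (by omega : N ≠ 0)
  obtain ⟨hG, hzero, hpos⟩ := nonneg_core hN hb hNM he
  set G := (cofactor N L e).eval (node N 0)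
  set p : ℝ[X] := C (node N 0) - X + C G⁻¹ * nodal N (L + 1) e with hp
  have hpdeg : p.natDegree ≤ 2 * ⌈(N : ℚ) / 4⌉₊ := by
    refine natDegree_add_le_of_degree_le ?_ ?_
    · refine (natDegree_sub_le _ _).trans ?_
      simp only [natDegree_C, natDegree_X]
      omega
    · exact (natDegree_C_mul_le _ _).trans ((natDegree_nodal_le _ _ _).trans hdeg)
  have hpnn : ∀ t, 0 ≤ p.eval t := by
    intro t
    have : p.eval t = G⁻¹ * (G * (node N 0 - t) + (nodal N (L + 1) e).eval t) := by
      simp only [hp, eval_add, eval_sub, eval_mul, eval_C, eval_X]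
      field_simp
    rw [this]
    exact mul_nonneg (inv_nonneg.mpr hG.le) (hpos t)
  obtain ⟨m, h, hh, hsum⟩ := exists_sum_sq_of_nonneg _ p hpdeg hpnn
  refine ⟨m, h, hh, fun i _ => ?_⟩
  have hx : (2 * (i : ℝ) - 1) * π / N = 2 * ((2 * (i : ℝ) - 1) * π / (2 * N)) := by
    field_simp
  have hcos : cos (N * ((2 * (i : ℝ) - 1) * π / (2 * N))) = 0 := by
    rw [cos_eq_zero_iff]
    refine ⟨(i : ℤ) - 1, ?_⟩
    push_cast
    field_simp
    ring
  have h1 : p.eval (cos ((2 * (i : ℝ) - 1) * π / N))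
      = cos (π / N) - cos ((2 * (i : ℝ) - 1) * π / N) := by
    simp only [hp, eval_add, eval_sub, eval_mul, eval_C, eval_X]
    rw [hx, hzero _ hcos]
    simp [node]
  rw [← h1, hsum]
  simp [eval_finsetSum]
end

section
/- Let N ≥ 3 be an integer. Suppose h_1, …, h_m are real polynomials in two variables such that cos(π/N) − cos(θ_i) = Σ_{j=1}^m h_j(cos θ_i, sin θ_i)² for every i ∈ {1, …, N}, where θ_i = (2i−1)π/N. Then some h_j has total degree at least N/4. (Hence the sum-of-squares/Lasserre hierarchy for the regular N-gon requires at least N/4 iterations.) -/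
open Real

/-!
On the unit circle a bivariate polynomial of total degree at most `k` is a trigonometric polynomial
of degree at most `k`: multiplied by `z ^ k`, it is a complex polynomial of degree at most `2 * k`
in `z = exp (θ * I)` (`exists_circle_poly`). So if it vanishes at the `N > 2 * k` vertices of the
regular `N`-gon, it vanishes on the whole circle (`eval_circle_eq_zero`).

If every `h j` had degree below `N / 4`, this would apply to `cos (π / N) - x - ∑ j, h j ^ 2`, whose
degree is at most `(N - 1) / 2`. The certificate would then hold at the point `(1, 0)`, where the
facet function `cos (π / N) - 1` is negative.
-/

/-- The substitution `cos θ = (z ^ 2 + 1) / (2 * z)`, `sin θ = (z ^ 2 - 1) / (2 * I * z)` with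
`z = exp (θ * I)`, after clearing denominators. -/
lemma exists_circle_poly (H : MvPolynomial (Fin 2) ℝ) (k : ℕ) (hk : H.totalDegree ≤ k) :
    ∃ P : Polynomial ℂ, P.natDegree ≤ 2 * k ∧ ∀ θ : ℝ,
      P.eval (Complex.exp (θ * Complex.I)) =
        Complex.exp (θ * Complex.I) ^ k *
          ((MvPolynomial.eval ![Real.cos θ, Real.sin θ] H : ℝ) : ℂ) := by
  have hdeg : ∀ s ∈ H.support, s 0 + s 1 ≤ k := by
    intro s hs
    have h1 := (MvPolynomial.le_totalDegree hs).trans hk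
    rwa [Finsupp.sum_fintype _ _ (fun _ => rfl), Fin.sum_univ_two] at h1
  refine ⟨∑ s ∈ H.support, Polynomial.C (((H.coeff s : ℝ) : ℂ) * (1 / 2) ^ s 0 *
    (1 / (2 * Complex.I)) ^ s 1) * ((Polynomial.X ^ 2 + 1) ^ s 0 *
      (Polynomial.X ^ 2 - 1) ^ s 1 * Polynomial.X ^ (k - (s 0 + s 1))), ?_, ?_⟩
  · refine Polynomial.natDegree_sum_le_of_forall_le _ _ fun s hs => ?_
    have hs' := hdeg s hs
    refine (Polynomial.natDegree_C_mul_le _ _).trans ?_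
    have e1 : ((Polynomial.X ^ 2 + 1 : Polynomial ℂ) ^ s 0).natDegree ≤ s 0 * 2 :=
      Polynomial.natDegree_pow_le_of_le _ (by compute_degree)
    have e2 : ((Polynomial.X ^ 2 - 1 : Polynomial ℂ) ^ s 1).natDegree ≤ s 1 * 2 :=
      Polynomial.natDegree_pow_le_of_le _ (by compute_degree)
    have e3 := Polynomial.natDegree_X_pow_le (R := ℂ) (k - (s 0 + s 1))
    have := Polynomial.natDegree_mul_le_of_le (Polynomial.natDegree_mul_le_of_le e1 e2) e3
    omega
  · intro θ
    set z := Complex.exp (θ * Complex.I) with hz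
    have hzv : z = Complex.cos θ + Complex.sin θ * Complex.I := Complex.exp_mul_I _
    have hcs := Complex.sin_sq_add_cos_sq (θ : ℂ)
    have hI := Complex.I_sq
    have h1 : z ^ 2 + 1 = 2 * z * Complex.cos θ := by
      rw [hzv]; linear_combination (-1 : ℂ) * hcs + (Complex.sin θ) ^ 2 * hI
    have h2 : z ^ 2 - 1 = 2 * Complex.I * z * Complex.sin θ := by
      rw [hzv]; linear_combination hcs - (Complex.sin θ) ^ 2 * hI
    rw [Polynomial.eval_finsetSum, MvPolynomial.eval_eq', Complex.ofReal_sum, Finset.mul_sum]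
    refine Finset.sum_congr rfl fun s hs => ?_
    have hs' := hdeg s hs
    simp only [Polynomial.eval_mul, Polynomial.eval_C, Polynomial.eval_pow, Polynomial.eval_add,
      Polynomial.eval_sub, Polynomial.eval_X, Polynomial.eval_one, h1, h2, Fin.prod_univ_two]
    have hzk : z ^ k = z ^ s 0 * z ^ s 1 * z ^ (k - (s 0 + s 1)) := by
      rw [← pow_add, ← pow_add]; congr 1; omega
    have hI0 := Complex.I_ne_zero
    rw [hzk]
    simp only [mul_pow, div_pow, one_pow]
    push_cast [Matrix.cons_val_zero, Matrix.cons_val_one]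
    field_simp

/-- The `N` vertices of the regular `N`-gon determine a polynomial of degree below `N / 2` on the
unit circle. -/
lemma eval_circle_eq_zero (N k : ℕ) (hk : 2 * k < N) (G : MvPolynomial (Fin 2) ℝ)
    (hG : G.totalDegree ≤ k)
    (h0 : ∀ i ∈ Finset.Icc 1 N, MvPolynomial.eval
      ![Real.cos ((2 * (i : ℝ) - 1) * π / N), Real.sin ((2 * (i : ℝ) - 1) * π / N)] G = 0)
    (θ : ℝ) : MvPolynomial.eval ![Real.cos θ, Real.sin θ] G = 0 := by
  obtain ⟨P, hPd, hP⟩ := exists_circle_poly G k hG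
  have hN0 : N ≠ 0 := by omega
  have hNC : (N : ℂ) ≠ 0 := by exact_mod_cast hN0
  have hprim := Complex.isPrimitiveRoot_exp N hN0
  -- The vertices, as complex numbers, are a rotation of the `N`-th roots of unity.
  have hpt : ∀ i : ℕ, Complex.exp ((((2 * ((i + 1 : ℕ) : ℝ) - 1) * π / N : ℝ) : ℂ) * Complex.I)
      = Complex.exp (π / N * Complex.I) * Complex.exp (2 * π * Complex.I / N) ^ i := by
    intro i
    rw [← Complex.exp_nat_mul, ← Complex.exp_add]
    congr 1
    push_cast
    field_simp
    ring
  have hP0 : P = 0 := by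
    refine Polynomial.eq_zero_of_natDegree_lt_card_of_eval_eq_zero P
      (f := fun i : Fin N => Complex.exp (π / N * Complex.I) *
        Complex.exp (2 * π * Complex.I / N) ^ (i : ℕ)) ?_ ?_ ?_
    · intro a b hab
      exact Fin.ext (hprim.pow_inj a.2 b.2 (mul_left_cancel₀ (Complex.exp_ne_zero _) hab))
    · intro i
      rw [← hpt, hP, h0 _ (Finset.mem_Icc.2 ⟨by omega, by omega⟩)]
      simp
    · rw [Fintype.card_fin]; omega
  have := hP θ
  rw [hP0, Polynomial.eval_zero] at this
  have h3 := (mul_eq_zero.1 this.symm).resolve_left (pow_ne_zero _ (Complex.exp_ne_zero _))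
  exact_mod_cast h3

/-- Any sum-of-squares certificate for the facet inequality `cos(π/N) − x ≥ 0` on the
vertices of the regular `N`-gon uses a polynomial of total degree at least `N/4`. -/
theorem thetaRank_lb (N : ℕ) (hN : 3 ≤ N) (m : ℕ) (h : Fin m → MvPolynomial (Fin 2) ℝ)
    (hcert : ∀ i ∈ Finset.Icc 1 N,
      Real.cos (π / N) - Real.cos ((2 * (i : ℝ) - 1) * π / N) =
        ∑ j, (MvPolynomial.eval
          ![Real.cos ((2 * (i : ℝ) - 1) * π / N), Real.sin ((2 * (i : ℝ) - 1) * π / N)]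
          (h j)) ^ 2) :
    ∃ j, (N : ℝ) / 4 ≤ ((h j).totalDegree : ℝ) := by
  by_contra! hlt
  have hdeg : ∀ j, 2 * (h j).totalDegree ≤ (N - 1) / 2 := by
    intro j
    have h1 := hlt j
    rw [lt_div_iff₀ (by norm_num)] at h1
    have h2 : (h j).totalDegree * 4 < N := by exact_mod_cast h1
    omega
  have key := eval_circle_eq_zero N ((N - 1) / 2) (by omega)
    (MvPolynomial.C (Real.cos (π / N)) - MvPolynomial.X 0 - ∑ j, h j ^ 2) ?_ ?_ 0
  · simp only [map_sub, map_sum, map_pow, MvPolynomial.eval_C, MvPolynomial.eval_X,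
      Matrix.cons_val_zero, Real.cos_zero] at key
    have hsum := Finset.sum_nonneg (s := Finset.univ) fun j (_ : j ∈ Finset.univ) =>
      sq_nonneg (MvPolynomial.eval ![1, Real.sin 0] (h j))
    have hNpos : (3 : ℝ) ≤ N := by exact_mod_cast hN
    have hpos : 0 < π / N := by positivity
    have hcos : Real.cos (π / N) < Real.cos 0 :=
      Real.cos_lt_cos_of_nonneg_of_le_pi le_rfl
        (div_le_self Real.pi_pos.le (by linarith)) hpos
    rw [Real.cos_zero] at hcos
    linarith
  · refine (MvPolynomial.totalDegree_sub _ _).trans (max_le ?_ ?_)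
    · refine (MvPolynomial.totalDegree_sub _ _).trans (max_le ?_ ?_)
      · simp
      · rw [MvPolynomial.totalDegree_X]; omega
    · exact MvPolynomial.totalDegree_finsetSum_le fun j _ =>
        (MvPolynomial.totalDegree_pow _ _).trans (hdeg j)
  · intro i hi
    simp only [map_sub, map_sum, map_pow, MvPolynomial.eval_C, MvPolynomial.eval_X,
      Matrix.cons_val_zero]
    rw [hcert i hi, sub_self]
end

section
/- For every integer n ≥ 1 and every real number θ, the following identity holds: (cos(π/2ⁿ) − cos θ)/sin(π/2ⁿ) = Σ_{k=0}^{n−2} (cos(2^k·π/2ⁿ) − cos(2^k θ))² / (2^k · sin(2^{k+1}·π/2ⁿ)) − cos(2^{n−1} θ)/2^{n−1}, where for n = 1 the sum on the right-hand side is empty. -/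
open Real Finset

/-!
For `sin a, cos a ≠ 0` the double-angle formulas give
`(cos a - cos θ) / sin a = (cos a - cos θ)² / sin 2a + ((cos 2a - cos 2θ) / sin 2a) / 2`
(`sos_step`). With `a = π / 2ⁿ`, the last term is half the left-hand side of the identity for
`n - 1` and `2θ`, so the result follows by induction on `n`, with base case `a = π / 2`.
-/

lemma sos_step (a θ : ℝ) (hs : Real.sin a ≠ 0) (hc : Real.cos a ≠ 0) :
    (Real.cos a - Real.cos θ) / Real.sin a =
      (Real.cos a - Real.cos θ) ^ 2 / Real.sin (2 * a) +
        (Real.cos (2 * a) - Real.cos (2 * θ)) / Real.sin (2 * a) / 2 := by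
  rw [Real.sin_two_mul, Real.cos_two_mul, Real.cos_two_mul]
  field_simp
  ring

/-- The telescoping trigonometric identity behind the sparse sum-of-squares certificate
for the regular `2ⁿ`-gon. -/
theorem sos_identity_pow_two (n : ℕ) (hn : 1 ≤ n) (θ : ℝ) :
    (Real.cos (π / 2 ^ n) - Real.cos θ) / Real.sin (π / 2 ^ n) =
      (∑ k ∈ Finset.range (n - 1),
        (Real.cos (2 ^ k * π / 2 ^ n) - Real.cos (2 ^ k * θ)) ^ 2 /
          (2 ^ k * Real.sin (2 ^ (k + 1) * π / 2 ^ n)))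
      - Real.cos (2 ^ (n - 1) * θ) / 2 ^ (n - 1) := by
  obtain ⟨m, rfl⟩ : ∃ m, n = m + 1 := ⟨n - 1, by omega⟩
  clear hn
  simp only [Nat.add_sub_cancel]
  induction m generalizing θ with
  | zero => simp
  | succ m ih =>
    have hpos : 0 < π / 2 ^ (m + 1 + 1) := by positivity
    have hlt : π / 2 ^ (m + 1 + 1) < π / 2 := by
      apply div_lt_div_of_pos_left Real.pi_pos (by norm_num)
      have : (1 : ℝ) ≤ 2 ^ m := one_le_pow₀ (by norm_num)
      rw [pow_succ, pow_succ]
      linarith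
    have hs : Real.sin (π / 2 ^ (m + 1 + 1)) ≠ 0 :=
      (Real.sin_pos_of_pos_of_lt_pi hpos (by linarith [Real.pi_pos])).ne'
    have hc : Real.cos (π / 2 ^ (m + 1 + 1)) ≠ 0 :=
      (Real.cos_pos_of_mem_Ioo ⟨by linarith, hlt⟩).ne'
    have hdouble : 2 * (π / 2 ^ (m + 1 + 1)) = π / 2 ^ (m + 1) := by
      rw [pow_succ _ (m + 1)]
      field_simp
    have hshift (j : ℕ) : (2 : ℝ) ^ (j + 1) * π / 2 ^ (m + 1 + 1) = 2 ^ j * π / 2 ^ (m + 1) := by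
      rw [pow_succ _ (m + 1), pow_succ _ j]
      field_simp
    have hangle (j : ℕ) : (2 : ℝ) ^ (j + 1) * θ = 2 ^ j * (2 * θ) := by ring
    rw [sos_step _ θ hs hc, hdouble, ih (2 * θ), Finset.sum_range_succ', sub_div,
      Finset.sum_div]
    simp only [hshift, hangle, pow_zero, one_mul]
    have hterm (k : ℕ) (x y : ℝ) : x / (2 ^ (k + 1) * y) = x / (2 ^ k * y) / 2 := by
      rw [div_div]
      congr 1
      ring
    simp only [hterm]
    rw [pow_succ 2 m, div_div]
    ring
end

section
/- Let n ≥ 1 be an integer and set N = 2ⁿ. For every i ∈ {1, …, N}, writing θ_i = (2i−1)π/N, one has cos(π/N) − cos(θ_i) = Σ_{k=0}^{n−2} [sin(π/N) / (2^k · sin(2^{k+1}·π/N))] · (cos(2^k·π/N) − cos(2^k θ_i))², where for n = 1 the sum is empty. In other words, the facet-defining linear function ℓ(x,y) = cos(π/2ⁿ) − x of the regular 2ⁿ-gon is, on the vertices of the regular 2ⁿ-gon, a nonnegative weighted sum of the n−1 squares (cos(2^k·π/2ⁿ) − cos(2^k θ))² for k = 0, …, n−2. -/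
open Real Finset

/-!
Put `α = π / 2ⁿ` and `D k = cos (2ᵏ α) - cos (2ᵏ θ)`. The double angle formula gives
`D (k + 1) = 2 * D k * (cos (2ᵏ α) + cos (2ᵏ θ))`, hence
`D k ^ 2 = 2 * cos (2ᵏ α) * D k - D (k + 1) / 2`. Dividing by `2ᵏ sin (2ᵏ⁺¹ α)` turns the sum into
a telescoping one in the quantities `D k / (2ᵏ sin (2ᵏ α))` (`square_eq_sub`). The first of these,
multiplied by `sin α`, is the left-hand side, and the last one vanishes because
`cos (2ⁿ⁻¹ θ) = 0` at every vertex (`cos_vertex_eq_zero`).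
-/

/-- One telescoping step; with `c = 2ᵏ`, `a = 2ᵏ α`, `t = 2ᵏ θ` it rewrites the `k`-th summand as a
difference of consecutive terms. -/
lemma square_eq_sub (s c a t : ℝ) (hc : c ≠ 0) (ha : Real.sin (2 * a) ≠ 0) :
    s / (c * Real.sin (2 * a)) * (Real.cos a - Real.cos t) ^ 2 =
      s * (Real.cos a - Real.cos t) / (c * Real.sin a) -
        s * (Real.cos (2 * a) - Real.cos (2 * t)) / (2 * c * Real.sin (2 * a)) := by
  rw [Real.sin_two_mul] at ha
  have hsin : Real.sin a ≠ 0 := fun h => ha (by rw [h]; ring)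
  have hcos : Real.cos a ≠ 0 := fun h => ha (by rw [h]; ring)
  rw [Real.sin_two_mul, Real.cos_two_mul, Real.cos_two_mul]
  field_simp
  ring

lemma cos_vertex_eq_zero (m i : ℕ) :
    Real.cos (2 ^ m * ((2 * (i : ℝ) - 1) * π / 2 ^ (m + 1))) = 0 := by
  rw [Real.cos_eq_zero_iff]
  refine ⟨(i : ℤ) - 1, ?_⟩
  push_cast
  field_simp
  ring

lemma sin_pow_mul_ne_zero (m k : ℕ) (hk : k ≤ m) :
    Real.sin (2 ^ k * π / 2 ^ (m + 1)) ≠ 0 := by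
  apply ne_of_gt
  apply Real.sin_pos_of_pos_of_lt_pi
  · positivity
  · rw [div_lt_iff₀ (by positivity), mul_comm]
    exact mul_lt_mul_of_pos_left (pow_lt_pow_right₀ (by norm_num) (by omega)) Real.pi_pos

/-- On the vertices of the regular `2ⁿ`-gon, the facet-defining linear function
`cos(π/2ⁿ) − x` is a nonnegative weighted sum of the squares
`(cos(2^k·π/2ⁿ) − cos(2^k θ))²` for `k = 0, …, n−2`. -/
theorem sparse_sos_certificate (n : ℕ) (hn : 1 ≤ n) :
    ∀ i ∈ Finset.Icc (1:ℕ) (2 ^ n),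
      Real.cos (π / 2 ^ n) - Real.cos ((2 * (i : ℝ) - 1) * π / 2 ^ n) =
        ∑ k ∈ Finset.range (n - 1),
          (Real.sin (π / 2 ^ n) / (2 ^ k * Real.sin (2 ^ (k + 1) * π / 2 ^ n))) *
            (Real.cos (2 ^ k * π / 2 ^ n) -
              Real.cos (2 ^ k * ((2 * (i : ℝ) - 1) * π / 2 ^ n))) ^ 2 := by
  intro i _
  obtain ⟨m, rfl⟩ : ∃ m, n = m + 1 := ⟨n - 1, by omega⟩
  rw [Nat.add_sub_cancel]
  set θ : ℝ := (2 * (i : ℝ) - 1) * π / 2 ^ (m + 1) with hθ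
  let F : ℕ → ℝ := fun k =>
    Real.sin (π / 2 ^ (m + 1)) * (Real.cos (2 ^ k * π / 2 ^ (m + 1)) - Real.cos (2 ^ k * θ)) /
      (2 ^ k * Real.sin (2 ^ k * π / 2 ^ (m + 1)))
  have hF0 : F 0 = Real.cos (π / 2 ^ (m + 1)) - Real.cos θ := by
    have h := sin_pow_mul_ne_zero m 0 (Nat.zero_le m)
    simp only [F, pow_zero, one_mul] at h ⊢
    exact mul_div_cancel_left₀ _ h
  have hFm : F m = 0 := by
    have hθm : Real.cos (2 ^ m * θ) = 0 := cos_vertex_eq_zero m i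
    have hm : (2 : ℝ) ^ m * π / 2 ^ (m + 1) = π / 2 := by
      field_simp
      ring
    simp only [F]
    rw [hθm, hm, Real.cos_pi_div_two]
    simp
  have hsum := Finset.sum_range_sub' F m
  rw [hF0, hFm, sub_zero] at hsum
  rw [← hsum]
  refine Finset.sum_congr rfl fun k hk => ?_
  have hk' : k + 1 ≤ m := Finset.mem_range.mp hk
  have hα : (2 : ℝ) ^ (k + 1) * π / 2 ^ (m + 1) = 2 * (2 ^ k * π / 2 ^ (m + 1)) := by ring
  have hθk : (2 : ℝ) ^ (k + 1) * θ = 2 * (2 ^ k * θ) := by ring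
  have hs := sin_pow_mul_ne_zero m (k + 1) hk'
  simp only [F]
  rw [hα] at hs ⊢
  rw [hθk, pow_succ' (2 : ℝ) k]
  exact (square_eq_sub _ _ _ _ (by positivity) hs).symm
end

section
/- Let n ≥ 2 be an integer. The convex hull of the vertex set of the regular 2ⁿ-gon equals the set of points (x₀, y₀) ∈ ℝ² for which there exist real numbers x₁, y₁, …, x_{n−2}, y_{n−2}, y_{n−1} such that for every k = 1, …, n−2 the 3×3 real symmetric matrix [[1, x_{k−1}, y_{k−1}], [x_{k−1}, (1+x_k)/2, y_k/2], [y_{k−1}, y_k/2, (1−x_k)/2]] is positive semidefinite, and the 3×3 real symmetric matrix [[1, x_{n−2}, y_{n−2}], [x_{n−2}, 1/2, y_{n−1}/2], [y_{n−2}, y_{n−1}/2, 1/2]] is positive semidefinite. (For n = 2 only the last matrix condition appears, involving x₀, y₀, y₁.) In particular the regular 2ⁿ-gon has a psd lift over the product (S³₊)^{n−1} of n−1 copies of the 3×3 positive semidefinite cone. -/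
/-!
The proof goes through the facet description of the polygon.  A point `p` and the next pair
`(X, Y)` satisfying the `3×3` condition obey, for the unit vector `u` of angle `φ`,
`⟨u, p⟩² ≤ (1 + cos 2φ · X + sin 2φ · Y) / 2` (`sq_le_of_psd`).  If `(X, Y)` satisfies the facet
inequalities of the `2^d`-gon, the half-angle formula turns this into the facet inequalities of
the `2^(d+1)`-gon for `p` (`facet_of_psd`).  Going down the chain to `(x 0, y 0)` gives all facet
inequalities of the `2ⁿ`-gon, and these characterise its convex hull
(`mem_convexHull_of_facets`): in polar coordinates a point lies in the triangle spanned by the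
origin and the two vertices of the nearest facet.

For the other inclusion, the lifted set is convex, since the matrix conditions are affine, and it
contains each vertex of angle `θ`, through `x k = cos (2^k θ)`, `y k = sin (2^k θ)`, for which
every matrix is the rank one matrix of the vector `(1, x (k-1), y (k-1))`.
-/

open Real Finset Matrix

/-- Positive semidefiniteness through the quadratic form written out in coordinates. -/
lemma posSemidef_iff_form (a b p q r : ℝ) :
    (!![1, a, b; a, p, q; b, q, r] : Matrix (Fin 3) (Fin 3) ℝ).PosSemidef ↔
      ∀ u v w : ℝ, 0 ≤ u ^ 2 + 2 * u * v * a + 2 * u * w * b + v ^ 2 * p + 2 * v * w * q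
        + w ^ 2 * r := by
  constructor
  · intro h u v w
    have := h.dotProduct_mulVec_nonneg ![u, v, w]
    simp [Matrix.mulVec, dotProduct, Fin.sum_univ_three] at this
    linarith
  · intro h
    refine Matrix.PosSemidef.of_dotProduct_mulVec_nonneg ?_ ?_
    · ext i j
      fin_cases i <;> fin_cases j <;> simp
    · intro z
      have := h (z 0) (z 1) (z 2)
      simp [Matrix.mulVec, dotProduct, Fin.sum_univ_three]
      linarith

/-- Nonnegativity of the quadratic form at `(-⟨u, (a, b)⟩, u)`, where
`u = (cos φ, sin φ)`. -/
lemma sq_le_of_psd {a b X Y : ℝ}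
    (h : (!![1, a, b; a, (1 + X) / 2, Y / 2; b, Y / 2, (1 - X) / 2] :
      Matrix (Fin 3) (Fin 3) ℝ).PosSemidef) (φ : ℝ) :
    (cos φ * a + sin φ * b) ^ 2 ≤ (1 + (cos (2 * φ) * X + sin (2 * φ) * Y)) / 2 := by
  have h1 := (posSemidef_iff_form _ _ _ _ _).1 h (-(cos φ * a + sin φ * b)) (cos φ) (sin φ)
  rw [cos_two_mul', sin_two_mul]
  have h2 := sin_sq_add_cos_sq φ
  linear_combination h1 + h2 / 2

/-- The half-angle step from a facet inequality with normal angle `2φ` and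
right-hand side `cos 2ψ` to one with normal angle `φ` and right-hand side `cos ψ`. -/
lemma facet_of_psd {a b X Y φ ψ : ℝ}
    (h : (!![1, a, b; a, (1 + X) / 2, Y / 2; b, Y / 2, (1 - X) / 2] :
      Matrix (Fin 3) (Fin 3) ℝ).PosSemidef)
    (hψ : 0 ≤ cos ψ)
    (hXY : cos (2 * φ) * X + sin (2 * φ) * Y ≤ cos (2 * ψ)) :
    cos φ * a + sin φ * b ≤ cos ψ := by
  have h1 := sq_le_of_psd h φ
  rw [cos_two_mul ψ] at hXY
  exact abs_le_of_sq_le_sq' (by linarith) hψ |>.2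

lemma cos_pi_div_two_pow_pos {d : ℕ} (hd : 2 ≤ d) : 0 < cos (π / 2 ^ d) := by
  apply cos_pos_of_mem_Ioo
  have h4 : (4 : ℝ) ≤ 2 ^ d := by
    calc (4 : ℝ) = 2 ^ 2 := by norm_num
      _ ≤ 2 ^ d := pow_le_pow_right₀ (by norm_num) hd
  have : π / 2 ^ d ≤ π / 4 := by
    gcongr
  have : 0 < π / 2 ^ d := by positivity
  constructor <;> linarith [pi_pos]

/-- The vertex set of the regular `2ⁿ`-gon. -/
def gonVertices (n : ℕ) : Set (ℝ × ℝ) :=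
  {p : ℝ × ℝ | ∃ i ∈ Finset.Icc (1:ℕ) (2 ^ n),
    p = (Real.cos ((2 * (i : ℝ) - 1) * π / 2 ^ n),
         Real.sin ((2 * (i : ℝ) - 1) * π / 2 ^ n))}

/-- By periodicity, vertices may be indexed by arbitrary integers. -/
lemma vertex_mem (n : ℕ) (m : ℤ) :
    (cos ((2 * (m : ℝ) - 1) * π / 2 ^ n), sin ((2 * (m : ℝ) - 1) * π / 2 ^ n))
      ∈ gonVertices n := by
  have hN : (0 : ℤ) < 2 ^ n := by positivity
  have h0 := Int.emod_nonneg (m - 1) hN.ne'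
  have h1 := Int.emod_lt_of_pos (m - 1) hN
  have h2 := Int.mul_ediv_add_emod (m - 1) (2 ^ n)
  obtain ⟨i, hi⟩ := Int.eq_ofNat_of_zero_le h0
  refine ⟨i + 1, ?_, ?_⟩
  · rw [Finset.mem_Icc]
    rw [hi] at h1
    have : i < 2 ^ n := by exact_mod_cast h1
    omega
  · rw [hi] at h2
    have h3 : (m : ℝ) = 2 ^ n * (((m - 1) / 2 ^ n : ℤ) : ℝ) + i + 1 := by
      have : m = 2 ^ n * ((m - 1) / 2 ^ n) + i + 1 := by linarith
      exact_mod_cast this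
    have hN' : (2 : ℝ) ^ n ≠ 0 := by positivity
    have h4 : (2 * (m : ℝ) - 1) * π / 2 ^ n
        = (2 * ((i + 1 : ℕ) : ℝ) - 1) * π / 2 ^ n
          + (((m - 1) / 2 ^ n : ℤ) : ℝ) * (2 * π) := by
      rw [h3]
      generalize (((m - 1) / 2 ^ n : ℤ) : ℝ) = t
      push_cast
      field_simp
      ring
    rw [h4, cos_add_int_mul_two_pi, sin_add_int_mul_two_pi]

lemma zero_mem_hull (n : ℕ) (hn : 1 ≤ n) : (0 : ℝ × ℝ) ∈ convexHull ℝ (gonVertices n) := by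
  obtain ⟨k, rfl⟩ : ∃ k, n = k + 1 := ⟨n - 1, by omega⟩
  have h1 := subset_convexHull ℝ _ (vertex_mem (k + 1) 0)
  have h2 := subset_convexHull ℝ _ (vertex_mem (k + 1) (2 ^ k))
  have e : (2 * ((2 ^ k : ℤ) : ℝ) - 1) * π / 2 ^ (k + 1)
      = (2 * ((0 : ℤ) : ℝ) - 1) * π / 2 ^ (k + 1) + π := by
    push_cast
    field_simp
    ring
  rw [e, cos_add_pi, sin_add_pi] at h2
  have := (convex_convexHull ℝ (gonVertices (k + 1))) h1 h2
    (by norm_num : (0 : ℝ) ≤ 1 / 2) (by norm_num : (0 : ℝ) ≤ 1 / 2) (by norm_num)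
  convert this using 1
  ext <;> simp

/-- The facet inequalities cut out the polygon.  The angle of a facet normal nearest to the
argument of the point selects the triangle containing it. -/
lemma mem_convexHull_of_facets (n : ℕ) (hn : 2 ≤ n) (p : ℝ × ℝ)
    (h : ∀ j : ℤ, cos (2 * π * j / 2 ^ n) * p.1 + sin (2 * π * j / 2 ^ n) * p.2
      ≤ cos (π / 2 ^ n)) :
    p ∈ convexHull ℝ (gonVertices n) := by
  obtain ⟨r, α, hr, hx, hy⟩ : ∃ r α : ℝ, 0 ≤ r ∧ p.1 = r * cos α ∧ p.2 = r * sin α :=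
    ⟨‖(⟨p.1, p.2⟩ : ℂ)‖, Complex.arg ⟨p.1, p.2⟩, norm_nonneg _,
      (Complex.norm_mul_cos_arg ⟨p.1, p.2⟩).symm, (Complex.norm_mul_sin_arg ⟨p.1, p.2⟩).symm⟩
  have hN : (0 : ℝ) < 2 ^ n := by positivity
  set j : ℤ := round (α * 2 ^ n / (2 * π)) with hj
  set φ : ℝ := 2 * π * j / 2 ^ n with hφ
  set δ : ℝ := π / 2 ^ n with hδ
  have hδ0 : 0 < δ := by positivity
  have hc : 0 < cos δ := cos_pi_div_two_pow_pos hn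
  have hδ1 : δ ≤ π := div_le_self pi_pos.le (one_le_pow₀ (by norm_num))
  have hδ2 : δ ≤ π / 2 := by
    rw [hδ]
    have : (2 : ℝ) ^ 1 ≤ 2 ^ n := pow_le_pow_right₀ (by norm_num) (by omega)
    gcongr
    linarith
  have hs : 0 < sin δ := sin_pos_of_pos_of_lt_pi hδ0 (by linarith [pi_pos])
  have hβ : |α - φ| ≤ δ := by
    have h1 := abs_sub_round (α * 2 ^ n / (2 * π))
    rw [← hj] at h1
    have e : α - φ = (α * 2 ^ n / (2 * π) - j) * (2 * δ) := by
      rw [hφ, hδ]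
      field_simp
    rw [e, abs_mul, abs_of_pos (by positivity : 0 < 2 * δ)]
    nlinarith
  obtain ⟨hβ1, hβ2⟩ := abs_le.1 hβ
  have hp1 : 0 ≤ sin (δ + (α - φ)) :=
    sin_nonneg_of_nonneg_of_le_pi (by linarith) (by linarith)
  have hp2 : 0 ≤ sin (δ - (α - φ)) :=
    sin_nonneg_of_nonneg_of_le_pi (by linarith) (by linarith)
  have hf : r * cos (α - φ) ≤ cos δ := by
    have := h j
    rw [← hφ, hx, hy] at this
    rw [cos_sub]
    linarith
  have hv1 : (cos (φ + δ), sin (φ + δ)) ∈ convexHull ℝ (gonVertices n) := by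
    have := subset_convexHull ℝ _ (vertex_mem n (j + 1))
    convert this using 3 <;> (rw [hφ, hδ]; push_cast; ring)
  have hv2 : (cos (φ - δ), sin (φ - δ)) ∈ convexHull ℝ (gonVertices n) := by
    have := subset_convexHull ℝ _ (vertex_mem n j)
    convert this using 3 <;> (rw [hφ, hδ]; ring)
  -- barycentric coordinates of the point in the triangle, by the law of sines
  have hD : 0 < sin (2 * δ) := by rw [sin_two_mul]; positivity
  set l := r * sin (δ + (α - φ)) / sin (2 * δ) with hl
  set m := r * sin (δ - (α - φ)) / sin (2 * δ) with hm
  have hl0 : 0 ≤ l := by positivity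
  have hm0 : 0 ≤ m := by positivity
  have hlm : l + m ≤ 1 := by
    rw [hl, hm, ← add_div, div_le_one hD, sin_add δ (α - φ), sin_sub δ (α - φ), sin_two_mul]
    nlinarith
  have hconv := (convex_convexHull ℝ (gonVertices n)).sum_mem (t := Finset.univ)
    (w := ![l, m, 1 - l - m])
    (z := ![(cos (φ + δ), sin (φ + δ)), (cos (φ - δ), sin (φ - δ)), 0])
    (by intro i _; fin_cases i <;> simp <;> linarith)
    (by simp [Fin.sum_univ_three])
    (by
      intro i _
      fin_cases i
      · exact hv1
      · exact hv2
      · exact zero_mem_hull n (by omega))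
  have hα : α = φ + (α - φ) := by ring
  have ha : l + m = r * cos (α - φ) / cos δ := by
    rw [hl, hm, sin_add δ (α - φ), sin_sub δ (α - φ), sin_two_mul]
    field_simp
    ring
  have hb : l - m = r * sin (α - φ) / sin δ := by
    rw [hl, hm, sin_add δ (α - φ), sin_sub δ (α - φ), sin_two_mul]
    field_simp
    ring
  have ha' : (l + m) * cos δ = r * cos (α - φ) := by rw [ha]; field_simp
  have hb' : (l - m) * sin δ = r * sin (α - φ) := by rw [hb]; field_simp
  convert hconv using 1
  rw [Fin.sum_univ_three]
  ext
  · simp only [Prod.fst_add, Prod.smul_fst, smul_eq_mul, Matrix.cons_val, Prod.fst_zero, mul_zero,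
      add_zero]
    rw [hx, hα, cos_add φ (α - φ), cos_add φ δ, cos_sub φ δ]
    linear_combination (-cos φ) * ha' + sin φ * hb'
  · simp only [Prod.snd_add, Prod.smul_snd, smul_eq_mul, Matrix.cons_val, Prod.snd_zero, mul_zero,
      add_zero]
    rw [hy, hα, sin_add φ (α - φ), sin_add φ δ, sin_sub φ δ]
    linear_combination (-sin φ) * ha' - cos φ * hb'

/-- The matrix conditions are affine in the entries, hence stable under convex combinations. -/
lemma posSemidef_convex_comb {a b p q r a' b' p' q' r' s t : ℝ}
    (h : (!![1, a, b; a, p, q; b, q, r] : Matrix (Fin 3) (Fin 3) ℝ).PosSemidef)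
    (h' : (!![1, a', b'; a', p', q'; b', q', r'] : Matrix (Fin 3) (Fin 3) ℝ).PosSemidef)
    (hs : 0 ≤ s) (ht : 0 ≤ t) (hst : s + t = 1) :
    (!![1, s * a + t * a', s * b + t * b';
        s * a + t * a', s * p + t * p', s * q + t * q';
        s * b + t * b', s * q + t * q', s * r + t * r'] :
      Matrix (Fin 3) (Fin 3) ℝ).PosSemidef := by
  convert (h.smul hs).add (h'.smul ht) using 1
  ext i j
  fin_cases i <;> fin_cases j <;> simp [hst]

/-- Rank one matrices realising the points of the unit circle. -/
lemma posSemidef_circle (θ : ℝ) :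
    (!![1, cos θ, sin θ; cos θ, (1 + cos (2 * θ)) / 2, sin (2 * θ) / 2;
        sin θ, sin (2 * θ) / 2, (1 - cos (2 * θ)) / 2] :
      Matrix (Fin 3) (Fin 3) ℝ).PosSemidef := by
  rw [posSemidef_iff_form]
  intro u v w
  have h := sin_sq_add_cos_sq θ
  rw [cos_two_mul', sin_two_mul]
  have := sq_nonneg (u + v * cos θ + w * sin θ)
  linear_combination this + (v ^ 2 / 2 + w ^ 2 / 2) * h

/-- The regular `2ⁿ`-gon is the projection of a product of `n−1` slices of the `3×3`
psd cone: an equivariant `(S³₊)^{n−1}` lift of the regular `2ⁿ`-gon. -/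
theorem psd_lift_pow_two_gon (n : ℕ) (hn : 2 ≤ n) :
    convexHull ℝ
        {p : ℝ × ℝ | ∃ i ∈ Finset.Icc (1:ℕ) (2 ^ n),
          p = (Real.cos ((2 * (i : ℝ) - 1) * π / 2 ^ n),
               Real.sin ((2 * (i : ℝ) - 1) * π / 2 ^ n))} =
      {p : ℝ × ℝ | ∃ x y : ℕ → ℝ, x 0 = p.1 ∧ y 0 = p.2 ∧
        (∀ k ∈ Finset.Icc 1 (n - 2),
          (!![1, x (k - 1), y (k - 1);
              x (k - 1), (1 + x k) / 2, y k / 2;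
              y (k - 1), y k / 2, (1 - x k) / 2] : Matrix (Fin 3) (Fin 3) ℝ).PosSemidef) ∧
        (!![1, x (n - 2), y (n - 2);
            x (n - 2), 1 / 2, y (n - 1) / 2;
            y (n - 2), y (n - 1) / 2, 1 / 2] : Matrix (Fin 3) (Fin 3) ℝ).PosSemidef} := by
  apply Set.Subset.antisymm
  · apply convexHull_min
    · rintro p ⟨i, -, rfl⟩
      set θ := (2 * (i : ℝ) - 1) * π / 2 ^ n with hθ
      refine ⟨fun k => cos (2 ^ k * θ), fun k => sin (2 ^ k * θ), by simp, by simp, ?_, ?_⟩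
      · intro k hk
        obtain ⟨k, rfl⟩ : ∃ l, k = l + 1 := ⟨k - 1, by rw [Finset.mem_Icc] at hk; omega⟩
        have := posSemidef_circle (2 ^ k * θ)
        rw [← mul_assoc, ← pow_succ'] at this
        exact this
      · obtain ⟨m, rfl⟩ : ∃ m, n = m + 2 := ⟨n - 2, by omega⟩
        have := posSemidef_circle (2 ^ m * θ)
        rw [← mul_assoc, ← pow_succ'] at this
        -- the doubled angle is an odd multiple of `π / 2`
        have h0 : cos (2 ^ (m + 1) * θ) = 0 := by
          rw [cos_eq_zero_iff]
          refine ⟨(i : ℤ) - 1, ?_⟩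
          rw [hθ]
          push_cast
          field_simp
          ring
        rw [h0, add_zero, sub_zero] at this
        exact this
    · rintro p ⟨x, y, hx, hy, h1, h2⟩ q ⟨x', y', hx', hy', h1', h2'⟩ s t hs ht hst
      refine ⟨fun k => s * x k + t * x' k, fun k => s * y k + t * y' k,
        by simp [hx, hx'], by simp [hy, hy'], ?_, ?_⟩
      · intro k hk
        have h3 := posSemidef_convex_comb (h1 k hk) (h1' k hk) hs ht hst
        have e1 : s * ((1 + x k) / 2) + t * ((1 + x' k) / 2)
            = (1 + (s * x k + t * x' k)) / 2 := by
          linear_combination (1 / 2) * hst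
        have e2 : s * ((1 - x k) / 2) + t * ((1 - x' k) / 2)
            = (1 - (s * x k + t * x' k)) / 2 := by
          linear_combination (1 / 2) * hst
        have e3 : s * (y k / 2) + t * (y' k / 2) = (s * y k + t * y' k) / 2 := by ring
        rw [e1, e2, e3] at h3
        exact h3
      · have h3 := posSemidef_convex_comb h2 h2' hs ht hst
        have e1 : s * (1 / 2) + t * (1 / 2) = 1 / 2 := by
          linear_combination (1 / 2) * hst
        have e3 : s * (y (n - 1) / 2) + t * (y' (n - 1) / 2)
            = (s * y (n - 1) + t * y' (n - 1)) / 2 := by ring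
        rw [e1, e3] at h3
        exact h3
  · rintro p ⟨x, y, hx, hy, h1, h2⟩
    have key : ∀ d, 2 ≤ d → d ≤ n → ∀ j : ℤ,
        cos (2 * π * j / 2 ^ d) * x (n - d) + sin (2 * π * j / 2 ^ d) * y (n - d)
          ≤ cos (π / 2 ^ d) := by
      intro d hd
      induction d, hd using Nat.le_induction with
      | base =>
        intro _ j
        have h3 : (!![1, x (n - 2), y (n - 2);
            x (n - 2), (1 + 0) / 2, y (n - 1) / 2;
            y (n - 2), y (n - 1) / 2, (1 - 0) / 2] : Matrix (Fin 3) (Fin 3) ℝ).PosSemidef := by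
          simpa using h2
        refine facet_of_psd h3 (cos_pi_div_two_pow_pos le_rfl).le ?_
        have e1 : 2 * (2 * π * j / 2 ^ 2) = j * π := by ring
        have e2 : 2 * (π / 2 ^ 2) = π / 2 := by ring
        rw [e1, e2, sin_int_mul_pi, cos_pi_div_two]
        simp
      | succ d hd ih =>
        intro hdn j
        have h3 := h1 (n - d) (by rw [Finset.mem_Icc]; omega)
        rw [show n - d - 1 = n - (d + 1) by omega] at h3
        refine facet_of_psd h3 (cos_pi_div_two_pow_pos (by omega)).le ?_
        have e1 : 2 * (2 * π * j / 2 ^ (d + 1)) = 2 * π * j / 2 ^ d := by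
          rw [pow_succ]; field_simp
        have e2 : 2 * (π / 2 ^ (d + 1)) = π / 2 ^ d := by
          rw [pow_succ]; field_simp
        rw [e1, e2]
        exact ih (by omega) j
    refine mem_convexHull_of_facets n hn p fun j => ?_
    have := key n hn le_rfl j
    rwa [Nat.sub_self, hx, hy] at this
end

section
/- Let k be a positive even integer and let 0 = a₀ < a₁ < … < a_{k−1} be real numbers. Let q(x) = Π_{i=0}^{k−1} (x − a_i) be the monic polynomial of degree k vanishing at the a_i. Then the following are equivalent: (i) there exists a real polynomial p of degree exactly k with p(a_i) = a_i for all i = 0, …, k−1 and p(x) ≥ 0 for all x ∈ ℝ; (ii) q(x) ≥ q'(0)·x for all x ∈ ℝ, where q' is the derivative of q. -/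
/-!
A degree-`k` polynomial `p` interpolating `p(aᵢ) = aᵢ` differs from `X` by a multiple of `q`, and
comparing degrees the multiplier is a constant `c`, so `p = X + c q`. If `p ≥ 0`, then `p(0) = 0`
is a minimum, so `p'(0) = 1 + c q'(0) = 0`, which forces `c = -1 / q'(0)`. Since
`q'(0) = ∏_{i ≥ 1} (-aᵢ)` is a product of an odd number of negative factors, `q'(0) < 0`
(`derivative_eval_zero_neg`), and for this `c` the inequality `p ≥ 0` is the tangent inequality
`q'(0) x ≤ q(x)` divided by `-q'(0) > 0`. Conversely `X - q / q'(0)` is the required interpolant.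
-/

open Polynomial Finset

lemma derivative_eval_zero_neg (k : ℕ) (hk : 0 < k) (hke : Even k)
    (a : ℕ → ℝ) (ha0 : a 0 = 0) (hmono : ∀ i j, i < j → j < k → a i < a j) :
    (∏ i ∈ Finset.range k, (X - C (a i))).derivative.eval 0 < 0 := by
  obtain ⟨m, rfl⟩ : ∃ m, k = m + 1 := ⟨k - 1, by omega⟩
  have hodd : Odd m := by
    rw [Nat.even_add_one] at hke
    exact Nat.not_even_iff_odd.mp hke
  have hpos : 0 < ∏ i ∈ Finset.range m, a (i + 1) := by
    refine Finset.prod_pos fun i hi => ?_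
    have := hmono 0 (i + 1) (by omega) (by simpa using hi)
    rwa [ha0] at this
  rw [Finset.prod_range_succ', ha0]
  simp only [map_zero, sub_zero, derivative_mul, derivative_X, eval_add, eval_mul, eval_X,
    mul_zero, zero_add, mul_one, eval_prod, eval_sub, eval_C, zero_sub]
  rw [Finset.prod_neg]
  simp only [Finset.card_range, hodd.neg_one_pow]
  linarith

/-- Characterization of sequences `0 = a₀ < a₁ < … < a_{k−1}` with nonnegative
interpolation degree `k`: a globally nonnegative interpolant of degree exactly `k`
exists iff the monic polynomial `q` vanishing at the `aᵢ` lies above its tangent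
line at `x = 0`. -/
theorem nonneg_interp_iff_tangent (k : ℕ) (hk : 0 < k) (hke : Even k)
    (a : ℕ → ℝ) (ha0 : a 0 = 0)
    (hmono : ∀ i j, i < j → j < k → a i < a j)
    (q : Polynomial ℝ) (hq : q = ∏ i ∈ Finset.range k, (X - C (a i))) :
    (∃ p : Polynomial ℝ, p.natDegree = k ∧ (∀ i < k, p.eval (a i) = a i) ∧
        ∀ x : ℝ, 0 ≤ p.eval x) ↔
      ∀ x : ℝ, (q.derivative.eval 0) * x ≤ q.eval x := by
  have hneg : q.derivative.eval 0 < 0 := by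
    rw [hq]; exact derivative_eval_zero_neg k hk hke a ha0 hmono
  have hqm : q.Monic := by
    rw [hq]; exact monic_prod_of_monic _ _ fun i _ => monic_X_sub_C _
  have hqd : q.natDegree = k := by
    rw [hq, natDegree_prod_of_monic _ _ fun i _ => monic_X_sub_C _]
    simp
  have hqz : ∀ i < k, q.eval (a i) = 0 := by
    intro i hi
    rw [hq, eval_prod]
    exact Finset.prod_eq_zero (Finset.mem_range.mpr hi) (by simp)
  have hk2 : 2 ≤ k := by
    obtain ⟨m, rfl⟩ := hke
    omega
  constructor
  · rintro ⟨p, hpd, hpi, hp⟩ x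
    have hdvd : q ∣ p - X := by
      rw [hq]
      refine Finset.prod_dvd_of_coprime ?_ ?_
      · intro i hi j hj hij
        have hi' : i < k := by simpa using hi
        have hj' : j < k := by simpa using hj
        refine isCoprime_X_sub_C_of_isUnit_sub ?_
        rw [isUnit_iff_ne_zero, sub_ne_zero]
        rcases lt_or_gt_of_ne hij with h | h
        · exact (hmono i j h hj').ne
        · exact (hmono j i h hi').ne'
      · intro i hi
        rw [dvd_iff_isRoot]
        simp [hpi i (by simpa using hi)]
    obtain ⟨s, hs⟩ := hdvd
    have hsd : s.natDegree = 0 := by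
      by_cases h0 : s = 0
      · simp [h0]
      have h1 : (q * s).natDegree = k + s.natDegree := by
        rw [natDegree_mul hqm.ne_zero h0, hqd]
      have h2 : (p - X).natDegree ≤ k :=
        (natDegree_sub_le _ _).trans (by rw [hpd, natDegree_X]; omega)
      rw [hs] at h2
      omega
    obtain ⟨c, rfl⟩ := natDegree_eq_zero.mp hsd
    have hpe : p = X + q * C c := by rw [← hs]; ring
    have hp0 : p.eval 0 = 0 := by simpa [ha0] using hpi 0 hk
    have hmin : IsLocalMin (fun y => p.eval y) 0 :=
      Filter.Eventually.of_forall fun y => by simpa [hp0] using hp y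
    have hder := hmin.hasDerivAt_eq_zero (p.hasDerivAt 0)
    rw [hpe] at hder
    simp at hder
    have hx := hp x
    rw [hpe] at hx
    simp only [eval_add, eval_X, eval_mul, eval_C] at hx
    -- Multiply `0 ≤ x + c q(x)` by `-q'(0)` and use `c q'(0) = -1`.
    have h1 := mul_nonneg (neg_nonneg.mpr hneg.le) hx
    linear_combination h1 - q.eval x * hder
  · intro h
    have hc : -(q.derivative.eval 0)⁻¹ ≠ 0 := neg_ne_zero.mpr (inv_ne_zero hneg.ne)
    refine ⟨X + C (-(q.derivative.eval 0)⁻¹) * q, ?_, ?_, ?_⟩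
    · have hd : (C (-(q.derivative.eval 0)⁻¹) * q).natDegree = k := by
        rw [natDegree_C_mul hc, hqd]
      rw [natDegree_add_eq_right_of_natDegree_lt, hd]
      rw [hd, natDegree_X]
      omega
    · intro i hi
      simp [hqz i hi]
    · intro x
      have h1 := mul_nonneg (inv_nonneg.mpr (neg_nonneg.mpr hneg.le)) (sub_nonneg.mpr (h x))
      have h2 : (q.derivative.eval 0)⁻¹ * q.derivative.eval 0 = 1 := inv_mul_cancel₀ hneg.ne
      simp only [eval_add, eval_X, eval_mul, eval_C]
      rw [inv_neg] at h1
      linear_combination h1 + x * h2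
end

section
/- Let k be a positive even integer and let 0 = a₀ < a₁ < … < a_{k−1} be real numbers that form a subadditive sequence, i.e., a_{i+j} ≤ a_i + a_j for all indices i, j ≥ 0 with i + j ≤ k−1. Then there exists a globally nonnegative real polynomial p of degree k such that p(a_i) = a_i for all i = 0, …, k−1; that is, the sequence (a₀, …, a_{k−1}) has nonnegative interpolation degree k. -/
open Polynomial Finset

/-!
A degree `k` polynomial interpolating the identity at the `aᵢ` has the form
`x + c ∏ (x - aᵢ)`. Since it vanishes at `a₀ = 0`, nonnegativity forces its derivative at `0` to
vanish, so `c = 1 / (a₁ ⋯ a_{k-1})` and, as `k - 1` is odd,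
`p(x) = x (1 - ∏_{i ≥ 1} (1 - x / aᵢ))`.

For `x ≤ 0` every factor of the product is at least `1`, so `p(x) ≥ 0`. For `x ≥ 0` the product
must be at most `1` (`prod_one_sub_div_le_one`). Beyond `a_{k-1}` it is a product of an odd number
of nonpositive factors. If `a_j ≤ x ≤ a_{j+1}`, then its absolute value is at most `1`: the factors
with `i > j` lie in `[0, 1]`, and for `1 ≤ i ≤ j` subadditivity gives
`x - aᵢ ≤ a_{j+1} - aᵢ ≤ a_{j+1-i}`, so `∏_{i ≤ j} (x - aᵢ) ≤ ∏_{i ≤ j} a_{j+1-i} = ∏_{i ≤ j} aᵢ`.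
-/

/-- The estimate for `x ≥ 0`. The terms `a₁, …, aₙ` are indexed as `a (i + 1)` with `i < n`. -/
theorem prod_one_sub_div_le_one (n : ℕ) (hn : Odd n) (a : ℕ → ℝ)
    (hpos : ∀ i < n, 0 < a (i + 1))
    (hmono : ∀ i j, i ≤ j → j < n → a (i + 1) ≤ a (j + 1))
    (hsub : ∀ i j, i + j ≤ n → a (i + j) ≤ a i + a j) (x : ℝ) (hx : 0 ≤ x) :
    ∏ i ∈ range n, (1 - x / a (i + 1)) ≤ 1 := by
  classical
  by_cases h : ∃ j, j < n ∧ x ≤ a (j + 1)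
  · obtain ⟨hjn, hxj⟩ := Nat.find_spec h
    have hmin : ∀ i < Nat.find h, a (i + 1) < x := fun i hi => by
      by_contra hc
      exact Nat.find_min h hi ⟨hi.trans hjn, not_lt.mp hc⟩
    generalize Nat.find h = j at hjn hxj hmin
    refine (le_abs_self _).trans ?_
    rw [← prod_range_mul_prod_Ico _ hjn.le, abs_mul]
    refine mul_le_one₀ ?_ (abs_nonneg _) ?_
    · have hP : 0 < ∏ i ∈ range j, a (i + 1) :=
        prod_pos fun i hi => hpos i ((mem_range.mp hi).trans hjn)
      have key : ∏ i ∈ range j, (x - a (i + 1)) ≤ ∏ i ∈ range j, a (i + 1) := by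
        rw [← prod_range_reflect (fun i => a (i + 1)) j]
        refine prod_le_prod (fun i hi => sub_nonneg.mpr (hmin i (mem_range.mp hi)).le) ?_
        intro i hi
        have hi := mem_range.mp hi
        have h1 := hsub (i + 1) (j - 1 - i + 1) (by omega)
        rw [show i + 1 + (j - 1 - i + 1) = j + 1 by omega] at h1
        linarith
      have heq : |∏ i ∈ range j, (1 - x / a (i + 1))|
          = (∏ i ∈ range j, (x - a (i + 1))) / ∏ i ∈ range j, a (i + 1) := by
        rw [abs_prod, ← prod_div_distrib]
        refine prod_congr rfl fun i hi => ?_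
        have hp := hpos i ((mem_range.mp hi).trans hjn)
        have hm := hmin i (mem_range.mp hi)
        rw [one_sub_div hp.ne', abs_div, abs_of_pos hp, abs_sub_comm, abs_of_pos (by linarith)]
      rw [heq]
      exact (div_le_one hP).mpr key
    · rw [abs_prod]
      refine prod_le_one (fun _ _ => abs_nonneg _) fun i hi => ?_
      obtain ⟨h1, h2⟩ := mem_Ico.mp hi
      have hp := hpos i h2
      have h3 : x / a (i + 1) ≤ 1 := (div_le_one hp).mpr (hxj.trans (hmono j i h1 h2))
      have h4 : 0 ≤ x / a (i + 1) := by positivity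
      rw [abs_le]
      constructor <;> linarith
  · push Not at h
    have heq : ∏ i ∈ range n, (1 - x / a (i + 1)) = -∏ i ∈ range n, (x / a (i + 1) - 1) := by
      have := prod_neg (s := range n) (fun i => x / a (i + 1) - 1)
      simpa [hn.neg_one_pow] using this
    have h0 : 0 ≤ ∏ i ∈ range n, (x / a (i + 1) - 1) := prod_nonneg fun i hi => by
      have hi := mem_range.mp hi
      exact sub_nonneg.mpr ((one_le_div (hpos i hi)).mpr (h i hi).le)
    linarith

/-- A subadditive sequence `0 = a₀ < a₁ < … < a_{k−1}` (with `k` even) has nonnegative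
interpolation degree `k`: there is a globally nonnegative polynomial of degree `k`
interpolating the identity at the `aᵢ`. -/
theorem subadditive_nonneg_interp (k : ℕ) (hk : 0 < k) (hke : Even k)
    (a : ℕ → ℝ) (ha0 : a 0 = 0)
    (hmono : ∀ i j, i < j → j < k → a i < a j)
    (hsub : ∀ i j, i + j ≤ k - 1 → a (i + j) ≤ a i + a j) :
    ∃ p : Polynomial ℝ, p.natDegree = k ∧ (∀ x : ℝ, 0 ≤ p.eval x) ∧
      ∀ i < k, p.eval (a i) = a i := by
  obtain ⟨n, rfl⟩ : ∃ n, k = n + 1 := ⟨k - 1, by omega⟩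
  have hn : Odd n := by
    rcases Nat.even_or_odd n with h | h
    · exact absurd hke (by simpa [Nat.even_add_one] using h)
    · exact h
  have hpos : ∀ i < n, 0 < a (i + 1) := fun i hi => by
    have := hmono 0 (i + 1) (by omega) (by omega)
    rwa [ha0] at this
  have hP : 0 < ∏ i ∈ range n, a (i + 1) := prod_pos fun i hi => hpos i (mem_range.mp hi)
  have hc : (∏ i ∈ range n, a (i + 1))⁻¹ ≠ 0 := inv_ne_zero hP.ne'
  have hdeg : (C (∏ i ∈ range n, a (i + 1))⁻¹ *
      ∏ i ∈ range (n + 1), (X - C (a i))).natDegree = n + 1 := by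
    rw [natDegree_C_mul hc, natDegree_finsetProd_X_sub_C_eq_card, card_range]
  refine ⟨X + C (∏ i ∈ range n, a (i + 1))⁻¹ * ∏ i ∈ range (n + 1), (X - C (a i)), ?_, ?_, ?_⟩
  · rw [natDegree_add_eq_right_of_natDegree_lt, hdeg]
    -- Evenness of `k` gives `1 < k`, so `X` does not affect the degree.
    rw [hdeg, natDegree_X]
    have := hn.pos
    omega
  · intro x
    have heq : (X + C (∏ i ∈ range n, a (i + 1))⁻¹ *
        ∏ i ∈ range (n + 1), (X - C (a i))).eval x
        = x * (1 - ∏ i ∈ range n, (1 - x / a (i + 1))) := by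
      have h1 : ∏ i ∈ range n, (1 - x / a (i + 1))
          = -((∏ i ∈ range n, (x - a (i + 1))) / ∏ i ∈ range n, a (i + 1)) := by
        rw [← prod_div_distrib]
        have := prod_neg (s := range n) (fun i => (x - a (i + 1)) / a (i + 1))
        rw [card_range, hn.neg_one_pow, neg_one_mul] at this
        rw [← this]
        refine prod_congr rfl fun i hi => ?_
        have := (hpos i (mem_range.mp hi)).ne'
        field_simp
        ring
      rw [h1]
      simp only [eval_add, eval_X, eval_mul, eval_C, eval_prod, eval_sub, prod_range_succ', ha0]
      field_simp
      ring
    rw [heq]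
    rcases le_total 0 x with hx | hx
    · refine mul_nonneg hx (sub_nonneg.mpr (prod_one_sub_div_le_one n hn a hpos ?_ ?_ x hx))
      · intro i j hij hj
        rcases hij.eq_or_lt with rfl | hlt
        · exact le_rfl
        · exact (hmono _ _ (by omega) (by omega)).le
      · exact fun i j hij => hsub i j (by omega)
    · refine mul_nonneg_of_nonpos_of_nonpos hx (sub_nonpos.mpr ?_)
      refine Finset.one_le_prod fun i hi => ?_
      have := div_nonpos_of_nonpos_of_nonneg hx (hpos i (mem_range.mp hi)).le
      linarith
  · intro i hi
    have : ∏ j ∈ range (n + 1), (a i - a j) = 0 :=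
      prod_eq_zero (mem_range.mpr hi) (sub_self _)
    simp [eval_prod, this]
end

section
/- Let 0 = a₀ < a₁ < a₂ < a₃ be real numbers. There exists a globally nonnegative real polynomial p of degree 4 with p(a_i) = a_i for i = 0, 1, 2, 3 (i.e., the sequence has nonnegative interpolation degree 4) if and only if (a₁ + a₂ + a₃)² ≤ 4(a₁a₂ + a₁a₃ + a₂a₃). -/
open Polynomial

/-!
Write `e₁, e₂, e₃` for the elementary symmetric functions of `a₁, a₂, a₃`. A nonnegative `p` with
`p(0) = 0` has a minimum at `0`, so `p'(0) = 0`. A quartic `p` with the prescribed values satisfies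
`p(x) = x + c x (x - a₁)(x - a₂)(x - a₃)`, and `p'(0) = 0` forces `c e₃ = 1`. Hence the only
candidate is `p(x) = c x² (x² - e₁ x + e₂)` with `c = 1 / e₃ > 0`, which is nonnegative exactly when
the discriminant `e₁² - 4 e₂` of the quadratic factor is nonpositive.
-/

/-- A sequence `0 = a₀ < a₁ < a₂ < a₃` has nonnegative interpolation degree `4` if and
only if `(a₁+a₂+a₃)² ≤ 4(a₁a₂+a₁a₃+a₂a₃)`. -/
theorem nonneg_interp_deg_four_iff (a₁ a₂ a₃ : ℝ)
    (h1 : 0 < a₁) (h2 : a₁ < a₂) (h3 : a₂ < a₃) :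
    (∃ p : Polynomial ℝ, p.natDegree = 4 ∧ (∀ x : ℝ, 0 ≤ p.eval x) ∧
        p.eval 0 = 0 ∧ p.eval a₁ = a₁ ∧ p.eval a₂ = a₂ ∧ p.eval a₃ = a₃) ↔
      (a₁ + a₂ + a₃) ^ 2 ≤ 4 * (a₁ * a₂ + a₁ * a₃ + a₂ * a₃) := by
  have h20 : 0 < a₂ := h1.trans h2
  have h30 : 0 < a₃ := h20.trans h3
  have he3 : 0 < a₁ * a₂ * a₃ := by positivity
  constructor
  · rintro ⟨p, hd, hp, p0, p1, p2, p3⟩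
    have hc0 : p.coeff 0 = 0 := by rw [coeff_zero_eq_eval_zero, p0]
    have hc1 : p.coeff 1 = 0 := by
      have hmin : IsLocalMin (fun x => p.eval x) 0 :=
        Filter.Eventually.of_forall fun x => by simpa [p0] using hp x
      have hder := hmin.hasDerivAt_eq_zero (p.hasDerivAt 0)
      rw [← coeff_zero_eq_eval_zero, coeff_derivative] at hder
      simpa using hder
    have hev : ∀ x, p.eval x = x ^ 2 * (p.coeff 2 + p.coeff 3 * x + p.coeff 4 * x ^ 2) := by
      intro x
      rw [eval_eq_sum_range, hd]
      simp only [Finset.sum_range_succ, Finset.sum_range_zero, hc0, hc1]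
      ring
    generalize p.coeff 2 = c2 at hev
    generalize p.coeff 3 = c3 at hev
    generalize p.coeff 4 = c4 at hev
    have key : ∀ a, 0 < a → p.eval a = a → a * (c2 + c3 * a + c4 * a ^ 2) = 1 := by
      intro a ha h
      rw [hev] at h
      apply mul_left_cancel₀ ha.ne'
      linear_combination h
    have k1 := key _ h1 p1
    have k2 := key _ h20 p2
    have k3 := key _ h30 p3
    -- Divided differences of `x ↦ c2 x + c3 x² + c4 x³`, which is `1` at each of the three nodes.
    have d12 : c2 + c3 * (a₁ + a₂) + c4 * (a₁ ^ 2 + a₁ * a₂ + a₂ ^ 2) = 0 := by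
      apply mul_left_cancel₀ (sub_pos.2 h2).ne'
      linear_combination k2 - k1
    have d13 : c2 + c3 * (a₁ + a₃) + c4 * (a₁ ^ 2 + a₁ * a₃ + a₃ ^ 2) = 0 := by
      apply mul_left_cancel₀ (sub_pos.2 (h2.trans h3)).ne'
      linear_combination k3 - k1
    have hc3 : c3 = -(c4 * (a₁ + a₂ + a₃)) := by
      apply mul_left_cancel₀ (sub_pos.2 h3).ne'
      linear_combination d13 - d12
    have hc2 : c2 = c4 * (a₁ * a₂ + a₁ * a₃ + a₂ * a₃) := by
      rw [hc3] at d12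
      linear_combination d12
    have hc4 : c4 * (a₁ * a₂ * a₃) = 1 := by
      rw [hc3, hc2] at k1
      linear_combination k1
    have hc4pos : 0 < c4 := pos_of_mul_pos_left (by rw [hc4]; exact one_pos) he3.le
    -- The quadratic factor attains its minimum at `e₁ / 2`.
    have hm := hp ((a₁ + a₂ + a₃) / 2)
    rw [hev, hc3, hc2] at hm
    have hm' : 0 ≤ (c4 * ((a₁ + a₂ + a₃) / 2) ^ 2) *
        ((a₁ * a₂ + a₁ * a₃ + a₂ * a₃) - (a₁ + a₂ + a₃) ^ 2 / 4) := by
      convert hm using 1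
      ring
    have := nonneg_of_mul_nonneg_right hm' (by positivity)
    linarith
  · intro h
    have hc : (a₁ * a₂ * a₃)⁻¹ ≠ 0 := inv_ne_zero he3.ne'
    have hev : ∀ x, (C (a₁ * a₂ * a₃)⁻¹ * (X ^ 4 - C (a₁ + a₂ + a₃) * X ^ 3 +
        C (a₁ * a₂ + a₁ * a₃ + a₂ * a₃) * X ^ 2)).eval x = (a₁ * a₂ * a₃)⁻¹ *
        (x ^ 2 * (x ^ 2 - (a₁ + a₂ + a₃) * x + (a₁ * a₂ + a₁ * a₃ + a₂ * a₃))) := by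
      intro x
      simp only [eval_mul, eval_add, eval_sub, eval_pow, eval_C, eval_X]
      ring
    refine ⟨_, ?_, fun x => ?_, (hev 0).trans ?_, (hev a₁).trans ?_, (hev a₂).trans ?_,
      (hev a₃).trans ?_⟩
    · rw [natDegree_C_mul hc]
      compute_degree!
    · rw [hev]
      have : 0 ≤ x ^ 2 - (a₁ + a₂ + a₃) * x + (a₁ * a₂ + a₁ * a₃ + a₂ * a₃) := by
        nlinarith [sq_nonneg (x - (a₁ + a₂ + a₃) / 2)]
      positivity
    · ring
    all_goals
      field_simp
      ring
end

section
/- Let k be a positive even integer and let a₀ > a₁ > … > a_{k−1} be real numbers. Let l(x) = c − m·x be a linear function with m > 0 such that l(a₀) = 0 (and hence l(a_i) ≥ 0 for i = 1, …, k−1). Let q(x) = Π_{i=0}^{k−1} (x − a_i). If the curve of q lies above its tangent line at x = a₀, i.e., q(x) ≥ q'(a₀)·(x − a₀) for all x ∈ ℝ, then there exists a real polynomial p of degree k that is globally nonnegative on ℝ and satisfies p(a_i) = l(a_i) for all i = 0, …, k−1. -/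
/-!
The interpolant is `p = l + (m / q'(a₀)) q`, where `l(x) = c - m x`. It agrees with `l` at the roots
`aᵢ` of `q`. As `q'(a₀) = ∏_{i ≥ 1} (a₀ - aᵢ) > 0`, scaling the tangent-line inequality by
`m / q'(a₀)` gives `(m / q'(a₀)) q(x) ≥ m (x - a₀) = -l(x)`, that is `p ≥ 0`. The degree is `k`
because `k ≥ 2` exceeds the degree of `l`.
-/

open Polynomial Finset

/-- Shifted version of the nonnegative interpolation criterion: if `q(x) = ∏ (x − aᵢ)`
(`a₀ > a₁ > … > a_{k−1}`, `k` even) lies above its tangent line at `x = a₀`, then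
any decreasing linear function `l` vanishing at `a₀` admits a globally nonnegative
interpolant of degree `k` through the points `(aᵢ, l(aᵢ))`. -/
theorem nonneg_interp_shifted (k : ℕ) (hk : 0 < k) (hke : Even k)
    (a : ℕ → ℝ) (hmono : ∀ i j, i < j → j < k → a j < a i)
    (c m : ℝ) (hm : 0 < m) (hl0 : c - m * a 0 = 0)
    (q : Polynomial ℝ) (hq : q = ∏ i ∈ Finset.range k, (X - C (a i)))
    (htangent : ∀ x : ℝ, q.derivative.eval (a 0) * (x - a 0) ≤ q.eval x) :
    ∃ p : Polynomial ℝ, p.natDegree = k ∧ (∀ x : ℝ, 0 ≤ p.eval x) ∧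
      ∀ i < k, p.eval (a i) = c - m * a i := by
  have hk2 : 1 < k := by
    obtain ⟨r, hr⟩ := hke
    omega
  have hd : 0 < q.derivative.eval (a 0) := by
    obtain ⟨n, rfl⟩ : ∃ n, k = n + 1 := ⟨k - 1, by omega⟩
    rw [hq, Finset.prod_range_succ', derivative_mul]
    simp only [derivative_X_sub_C, eval_add, eval_mul, eval_sub, eval_X, eval_C, sub_self,
      mul_zero, zero_add, mul_one, eval_one, eval_prod]
    refine Finset.prod_pos fun i hi => ?_
    have := hmono 0 (i + 1) (by omega) (by have := Finset.mem_range.mp hi; omega)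
    linarith
  have hqdeg : q.natDegree = k := by
    rw [hq, natDegree_finsetProd_X_sub_C_eq_card, Finset.card_range]
  set d := q.derivative.eval (a 0)
  have ht : m / d ≠ 0 := (div_pos hm hd).ne'
  refine ⟨C (m / d) * q + (C (-m) * X + C c), ?_, fun x => ?_, fun i hi => ?_⟩
  · have h1 : (C (m / d) * q).natDegree = k := by rw [natDegree_C_mul ht, hqdeg]
    rw [natDegree_add_eq_left_of_natDegree_lt, h1]
    rw [h1]
    exact lt_of_le_of_lt natDegree_linear_le hk2
  · have h := mul_le_mul_of_nonneg_left (htangent x) (div_pos hm hd).le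
    rw [← mul_assoc, div_mul_cancel₀ m hd.ne'] at h
    simp only [eval_add, eval_mul, eval_C, eval_X]
    linarith
  · have hz : q.eval (a i) = 0 := by
      rw [hq, eval_prod]
      exact Finset.prod_eq_zero (Finset.mem_range.mpr hi) (by simp)
    simp only [eval_add, eval_mul, eval_C, eval_X, hz]
    ring
end

section
/- Let N be a positive integer and let T_N denote the Chebyshev polynomial of the first kind of degree N. Then for every real u ≥ cos(π/N) and every x ≥ −1, T_N(x) ≥ T_N(u) + T_N'(u)·(x − u), where T_N' is the derivative of T_N. Moreover, if N is even, this inequality holds for all x ∈ ℝ. -/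
/-!
Write `c = cos (π / N)`. The derivative `T_N' = N * U_{N-1}` has positive leading coefficient, and
its roots `cos (k π / N)`, `1 ≤ k ≤ N - 1`, are all real and at most `c`. Hence on `[c, ∞)` it is
a product of nonnegative increasing linear factors: `T_N'` is nonnegative and increasing there
(`eval_U_nonneg_le`), so `T_N` is convex on `[c, ∞)` and lies above its tangents
(`tangent_le_of_cos_le`). For `-1 ≤ x ≤ c` the tangent at `u ≥ c` is nondecreasing, so its value
at `x` is at most its value at `c`, hence at most `T_N c = -1`, the minimum of `T_N` on `[-1, 1]`.
For even `N` and `x < -1`, the symmetry `T_N x = T_N (-x)` and the monotonicity of the tangent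
reduce the inequality to the point `-x`.
-/

open Real Polynomial Polynomial.Chebyshev

/-- On `[cos (π / (n + 1)), ∞)`, a half-line to the right of all the roots of `U_n`, the
polynomial `U_n` is nonnegative and nondecreasing. -/
lemma eval_U_nonneg_le (n : ℕ) {x y : ℝ} (hx : Real.cos (π / (n + 1)) ≤ x) (hxy : x ≤ y) :
    0 ≤ (U ℝ n).eval x ∧ (U ℝ n).eval x ≤ (U ℝ n).eval y := by
  set s := (Finset.range n).image (fun (k : ℕ) => Real.cos ((k + 1) * π / (n + 1))) with hs
  have hroots : (U ℝ n).roots = s.val := roots_U_real n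
  have hcard : Multiset.card (U ℝ n).roots = (U ℝ n).natDegree := by
    have hnodup := roots_U_real_nodup n
    rw [hroots, natDegree_U_natCast, hs, Finset.card_val, Finset.card_image_of_injOn,
      Finset.card_range]
    exact (Finset.range n).nodup_map_iff_injOn.mp hnodup
  have hfac : ∀ z, (U ℝ n).eval z = 2 ^ n * ∏ a ∈ s, (z - a) := by
    intro z
    conv_lhs => rw [← C_leadingCoeff_mul_prod_multiset_X_sub_C hcard]
    rw [hroots, leadingCoeff_U_natCast]
    change eval z (Polynomial.C (2 ^ n) * ∏ a ∈ s, (X - Polynomial.C a)) = _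
    simp [eval_prod]
  have hle : ∀ a ∈ s, a ≤ x := by
    intro a ha
    obtain ⟨k, hk, rfl⟩ := Finset.mem_image.mp ha
    have hk' : (k : ℝ) + 1 ≤ n + 1 := by
      have := Finset.mem_range.mp hk
      exact_mod_cast (by omega : k + 1 ≤ n + 1)
    refine le_trans (Real.cos_le_cos_of_nonneg_of_le_pi (by positivity) ?_ ?_) hx
    · rw [div_le_iff₀ (by positivity), mul_comm]
      exact mul_le_mul_of_nonneg_left hk' pi_pos.le
    · gcongr
      nlinarith [pi_pos, (Nat.cast_nonneg k : (0 : ℝ) ≤ k)]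
  rw [hfac, hfac]
  refine ⟨mul_nonneg (by positivity) (Finset.prod_nonneg fun a ha => sub_nonneg.2 (hle a ha)),
    mul_le_mul_of_nonneg_left (Finset.prod_le_prod (fun a ha => sub_nonneg.2 (hle a ha))
      fun a _ => by linarith) (by positivity)⟩

lemma derivative_T_nonneg_le (N : ℕ) (hN : 0 < N) {x y : ℝ} (hx : Real.cos (π / N) ≤ x)
    (hxy : x ≤ y) :
    0 ≤ (T ℝ N).derivative.eval x ∧ (T ℝ N).derivative.eval x ≤ (T ℝ N).derivative.eval y := by
  obtain ⟨n, rfl⟩ : ∃ n, N = n + 1 := ⟨N - 1, by omega⟩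
  have hder : ∀ z, (T ℝ (n + 1 : ℕ)).derivative.eval z = (n + 1) * (U ℝ n).eval z := by
    intro z
    rw [T_derivative_eq_U]
    simp
  push_cast at hx
  obtain ⟨h0, h1⟩ := eval_U_nonneg_le n hx hxy
  rw [hder, hder]
  exact ⟨by positivity, by gcongr⟩

/-- The tangent inequality on the half-line `[cos (π / N), ∞)`, where `T_N` is convex. -/
lemma tangent_le_of_cos_le (N : ℕ) (hN : 0 < N) {u x : ℝ} (hu : Real.cos (π / N) ≤ u)
    (hx : Real.cos (π / N) ≤ x) :
    (T ℝ N).eval u + (T ℝ N).derivative.eval u * (x - u) ≤ (T ℝ N).eval x := by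
  have hconv : ConvexOn ℝ (Set.Ici (Real.cos (π / N))) (fun z => (T ℝ N).eval z) := by
    refine MonotoneOn.convexOn_of_deriv (convex_Ici _) (T ℝ N).continuous.continuousOn
      (T ℝ N).differentiable.differentiableOn ?_
    intro a ha b _ hab
    rw [Polynomial.deriv, Polynomial.deriv]
    exact (derivative_T_nonneg_le N hN (interior_subset ha) hab).2
  have hd := (T ℝ N).hasDerivAt u
  rcases lt_trichotomy u x with h | rfl | h
  · have := hconv.le_slope_of_hasDerivAt hu hx h hd
    rw [slope_def_field, le_div_iff₀ (by linarith)] at this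
    linarith
  · simp
  · have := hconv.slope_le_of_hasDerivAt hx hu h hd
    rw [slope_def_field, div_le_iff₀ (by linarith)] at this
    linarith

/-- The Chebyshev polynomial `T_N` lies above its tangent line at any point
`u ≥ cos(π/N)`, on the interval `[−1, ∞)`; when `N` is even, on all of `ℝ`. -/
theorem chebyshev_above_tangent (N : ℕ) (hN : 0 < N) :
    (∀ u x : ℝ, Real.cos (π / N) ≤ u → -1 ≤ x →
      (Polynomial.Chebyshev.T ℝ N).eval u +
          (Polynomial.Chebyshev.T ℝ N).derivative.eval u * (x - u) ≤
        (Polynomial.Chebyshev.T ℝ N).eval x) ∧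
    (Even N → ∀ u x : ℝ, Real.cos (π / N) ≤ u →
      (Polynomial.Chebyshev.T ℝ N).eval u +
          (Polynomial.Chebyshev.T ℝ N).derivative.eval u * (x - u) ≤
        (Polynomial.Chebyshev.T ℝ N).eval x) := by
  have hmain : ∀ u x : ℝ, Real.cos (π / N) ≤ u → -1 ≤ x →
      (T ℝ N).eval u + (T ℝ N).derivative.eval u * (x - u) ≤ (T ℝ N).eval x := by
    intro u x hu hx
    rcases le_total (Real.cos (π / N)) x with hcx | hxc
    · exact tangent_le_of_cos_le N hN hu hcx
    · have hc := tangent_le_of_cos_le N hN hu le_rfl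
      have hTc : (T ℝ N).eval (Real.cos (π / N)) = -1 := by
        have hN0 : (N : ℝ) ≠ 0 := by positivity
        rw [T_real_cos, Int.cast_natCast, mul_div_cancel₀ _ hN0, Real.cos_pi]
      have hTx := (eval_T_real_mem_Icc N ⟨hx, hxc.trans (Real.cos_le_one _)⟩).1
      have hd := mul_le_mul_of_nonneg_left (sub_le_sub_right hxc u)
        (derivative_T_nonneg_le N hN hu le_rfl).1
      linarith
  refine ⟨hmain, fun hev u x hu => ?_⟩
  rcases le_total (-1) x with hx | hx
  · exact hmain u x hu hx
  · have hsymm : (T ℝ N).eval (-x) = (T ℝ N).eval x := by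
      rw [T_eval_neg, Int.negOnePow_even _ (by exact_mod_cast hev)]
      simp
    have hneg := hmain u (-x) hu (by linarith)
    have hd := mul_le_mul_of_nonneg_left (by linarith : x - u ≤ -x - u)
      (derivative_T_nonneg_le N hN hu le_rfl).1
    linarith
end

section
/- For an integer N ≥ 1, let q_N(X) = Π_{i=0}^{⌈N/2⌉−1} (X − cos((2i+1)π/N)). Then: if N is even, there exists a nonzero real constant c with q_N = c·T_{N/2}; and if N is odd, there exists a nonzero real constant c with q_N = c·(T_{(N−1)/2} + T_{(N+1)/2}). -/
open Real Polynomial Polynomial.Chebyshev Finset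

/-!
The `⌈N/2⌉` numbers `cos ((2i+1)π/N)` are pairwise distinct, because the angles lie in `[0, π]`,
where cosine is injective. Hence a polynomial of degree `⌈N/2⌉` vanishing at all of them equals
`q_N` times its leading coefficient (`prod_eq_C_mul`). For `N = 2m` the polynomial `T_m` qualifies,
since `T_m (cos θ) = cos (m θ)` and `m θ` is an odd multiple of `π / 2`. For `N = 2m + 1`
the polynomial `T_m + T_{m+1}` qualifies: with `N θ` an odd multiple of `π`, the angles `m θ` and
`(m + 1) θ` add up to an odd multiple of `π`, so their cosines are opposite.
-/

lemma injOn_cos_odd_mul_pi_div (N : ℕ) :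
    Set.InjOn (fun i : ℕ => Real.cos ((2 * (i : ℝ) + 1) * π / N))
      (Finset.range ((N + 1) / 2)) := by
  have key : ∀ i ∈ (Finset.range ((N + 1) / 2) : Set ℕ),
      0 < (N : ℝ) ∧ (2 * (i : ℝ) + 1) * π / N ∈ Set.Icc 0 π := by
    intro i hi
    have hi' : 2 * i + 1 ≤ N := by
      have := Finset.mem_range.1 (Finset.mem_coe.1 hi)
      omega
    have hiR : 2 * (i : ℝ) + 1 ≤ N := by exact_mod_cast hi'
    have hN : 0 < (N : ℝ) := lt_of_lt_of_le (by positivity) hiR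
    refine ⟨hN, by positivity, ?_⟩
    rw [div_le_iff₀ hN, mul_comm π]
    exact mul_le_mul_of_nonneg_right hiR pi_pos.le
  intro i hi j hj hij
  obtain ⟨hN, hi'⟩ := key i hi
  have h := injOn_cos hi' (key j hj).2 hij
  rw [div_left_inj' hN.ne', mul_left_inj' pi_pos.ne'] at h
  have : (i : ℝ) = j := by linarith
  exact_mod_cast this

/-- A polynomial of degree `⌈N/2⌉` vanishing at every `cos ((2i+1)π/N)` is proportional
to the monic polynomial with these roots. -/
lemma prod_eq_C_mul (N : ℕ) (P : ℝ[X]) (hP : P ≠ 0) (hdeg : P.natDegree = (N + 1) / 2)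
    (hroot : ∀ i : ℕ, P.eval (Real.cos ((2 * (i : ℝ) + 1) * π / N)) = 0) :
    ∃ c : ℝ, c ≠ 0 ∧ ∏ i ∈ Finset.range ((N + 1) / 2),
      (X - C (Real.cos ((2 * (i : ℝ) + 1) * π / N))) = C c * P := by
  set q : ℝ[X] := ∏ i ∈ Finset.range ((N + 1) / 2),
      (X - C (Real.cos ((2 * (i : ℝ) + 1) * π / N))) with hq
  have hmonic : q.Monic := monic_prod_of_monic _ _ fun i _ => monic_X_sub_C _
  have hqdeg : q.natDegree = (N + 1) / 2 := by
    rw [hq, natDegree_prod_of_monic _ _ fun i _ => monic_X_sub_C _]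
    simp
  have hdvd : q ∣ P := by
    refine Finset.prod_dvd_of_coprime (fun i hi j hj hij => ?_)
      fun i _ => dvd_iff_isRoot.2 (hroot i)
    refine isCoprime_X_sub_C_of_isUnit_sub (IsUnit.mk0 _ (sub_ne_zero.2 fun h => hij ?_))
    exact injOn_cos_odd_mul_pi_div N hi hj h
  have h := eq_leadingCoeff_mul_of_monic_of_dvd_of_natDegree_le hmonic hdvd
    (hdeg.trans hqdeg.symm).le
  have hlc : P.leadingCoeff ≠ 0 := leadingCoeff_ne_zero.2 hP
  refine ⟨P.leadingCoeff⁻¹, inv_ne_zero hlc, ?_⟩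
  generalize P.leadingCoeff = a at h hlc
  rw [h, ← mul_assoc, ← Polynomial.C_mul, inv_mul_cancel₀ hlc, Polynomial.C_1, one_mul]

/-- The monic polynomial with roots `cos((2i+1)π/N)`, `i = 0, …, ⌈N/2⌉−1`, is a nonzero
scalar multiple of `T_{N/2}` when `N` is even, and of `(T_{(N−1)/2} + T_{(N+1)/2})`
when `N` is odd. -/
theorem qN_eq_chebyshev (N : ℕ) (hN : 1 ≤ N)
    (q : Polynomial ℝ)
    (hq : q = ∏ i ∈ Finset.range ((N + 1) / 2),
        (X - C (Real.cos ((2 * (i : ℝ) + 1) * π / N)))) :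
    (Even N → ∃ c : ℝ, c ≠ 0 ∧ q = C c * Polynomial.Chebyshev.T ℝ (N / 2)) ∧
    (Odd N → ∃ c : ℝ, c ≠ 0 ∧
      q = C c * (Polynomial.Chebyshev.T ℝ ((N - 1) / 2) +
                 Polynomial.Chebyshev.T ℝ ((N + 1) / 2))) := by
  subst hq
  constructor
  · rintro ⟨m, rfl⟩
    have hm : (m : ℝ) ≠ 0 := by
      have : m ≠ 0 := by omega
      exact_mod_cast this
    have e : (((m + m : ℕ) : ℤ) / 2) = (m : ℤ) := by omega
    rw [e]
    refine prod_eq_C_mul _ _ (T_ne_zero ℝ _) ?_ fun i => ?_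
    · rw [natDegree_T]
      omega
    · rw [T_real_cos, Real.cos_eq_zero_iff]
      refine ⟨i, ?_⟩
      push_cast
      field_simp
      ring
  · rintro ⟨m, rfl⟩
    have e₁ : ((((2 * m + 1 : ℕ) : ℤ) - 1) / 2) = (m : ℤ) := by omega
    have e₂ : ((((2 * m + 1 : ℕ) : ℤ) + 1) / 2) = (m : ℤ) + 1 := by omega
    rw [e₁, e₂]
    have hlt : (T ℝ (m : ℤ)).natDegree < (T ℝ ((m : ℤ) + 1)).natDegree := by
      rw [natDegree_T, natDegree_T]
      omega
    have hdeg : (T ℝ (m : ℤ) + T ℝ ((m : ℤ) + 1)).natDegree = m + 1 := by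
      rw [natDegree_add_eq_right_of_natDegree_lt hlt, natDegree_T]
      omega
    refine prod_eq_C_mul _ _ ?_ ?_ fun i => ?_
    · intro h
      rw [h, natDegree_zero] at hdeg
      omega
    · omega
    · have hm : (2 * (m : ℝ) + 1) ≠ 0 := by positivity
      rw [eval_add, T_real_cos, T_real_cos]
      -- `(m + 1) θ = (π - m θ) + i (2π)`, where `θ = (2i+1)π / (2m+1)`
      have h : (((m : ℤ) + 1 : ℤ) : ℝ) * ((2 * (i : ℝ) + 1) * π / ((2 * m + 1 : ℕ) : ℝ)) =
          (π - ((m : ℤ) : ℝ) * ((2 * (i : ℝ) + 1) * π / ((2 * m + 1 : ℕ) : ℝ))) +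
            i * (2 * π) := by
        push_cast
        field_simp
        ring
      rw [h, Real.cos_add_nat_mul_two_pi, Real.cos_pi_sub, add_neg_cancel]
end

section
/- Let N ≥ 3 be an integer and let K ⊆ ℤ/Nℤ be a set with |K| < ln(N/2). Then K admits a valid clustering: there exist an integer γ with 1 ≤ γ < N/2 and a partition of K into disjoint clusters K = ⋃_{α∈A} C_α such that every cluster C_α has in-diameter at most γ, and for all α ≠ α' the cyclic distance d(C_α, C_{α'}) is strictly greater than γ. -/
/-!
Start with the partition of `K` into singletons and `γ = 1`, and merge greedily: as long as two
clusters contain points at distance at most `γ`, replace them by their union and double `γ`.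

The invariant is that clusters can be enclosed in arcs whose lengths *sum* to at most `γ`. Merging
two clusters at distance at most `γ` yields a cluster enclosed in an arc longer than the two old arcs
together by at most `γ`, so the sum of the lengths at most goes from `γ` to `2γ`
(`HasInDiamLE.union_of_cycDist_le`). Each merge removes a cluster, so the process stops with
`γ ≤ 2 ^ |K|` (`exists_clustering_of_arcs`), and `2 ^ |K| ≤ e ^ |K| < N / 2` by hypothesis.
-/

open Real Finset

/-- The cyclic distance on `ℤ/Nℤ`: `d(a,b) = min{|m| : m ∈ ℤ, m ≡ a − b (mod N)}`. -/
def cycDist (N : ℕ) (a b : ZMod N) : ℕ := min (a - b).val (b - a).val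

/-- `C ⊆ ℤ/Nℤ` has in-diameter at most `γ` if it is contained in an interval
`{x, x+1, …, x+γ}`. -/
def HasInDiamLE (N γ : ℕ) (C : Finset (ZMod N)) : Prop :=
  ∃ x : ZMod N, ∀ c ∈ C, ∃ t : ℕ, t ≤ γ ∧ c = x + (t : ZMod N)

theorem HasInDiamLE.mono {N γ δ : ℕ} {C : Finset (ZMod N)} (h : HasInDiamLE N γ C)
    (hle : γ ≤ δ) : HasInDiamLE N δ C := by
  obtain ⟨x, hx⟩ := h
  refine ⟨x, fun c hc => ?_⟩
  obtain ⟨t, ht, rfl⟩ := hx c hc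
  exact ⟨t, ht.trans hle, rfl⟩

/-- Two arcs joined by a forward step of length `t` lie in one arc of length at most
the sum of the three lengths. -/
theorem HasInDiamLE.union_of_eq_add {N l l' t : ℕ} {C C' : Finset (ZMod N)}
    (h : HasInDiamLE N l C) (h' : HasInDiamLE N l' C') {k k' : ZMod N} (hk : k ∈ C)
    (hk' : k' ∈ C') (hkk : k' = k + (t : ZMod N)) : HasInDiamLE N (l + l' + t) (C ∪ C') := by
  obtain ⟨x, hx⟩ := h
  obtain ⟨x', hx'⟩ := h'
  obtain ⟨b, hb, rfl⟩ := hx' k' hk'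
  obtain ⟨a, ha, rfl⟩ := hx k hk
  -- `x' = x + (a + t - b)`; the enclosing arc starts at whichever of `x`, `x'` comes first.
  rcases le_total b (a + t) with hab | hab
  · obtain ⟨s, hs⟩ := Nat.exists_eq_add_of_le hab
    have hs' : (a : ZMod N) + t = b + s := by exact_mod_cast congrArg (Nat.cast (R := ZMod N)) hs
    have e : x' = x + s := by linear_combination hkk + hs'
    refine ⟨x, fun c hc => ?_⟩
    rcases Finset.mem_union.1 hc with hc | hc
    · obtain ⟨r, hr, rfl⟩ := hx c hc
      exact ⟨r, by omega, rfl⟩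
    · obtain ⟨r, hr, rfl⟩ := hx' c hc
      exact ⟨s + r, by omega, by rw [e]; push_cast; ring⟩
  · obtain ⟨s, hs⟩ := Nat.exists_eq_add_of_le hab
    have hs' : (b : ZMod N) = a + t + s := by exact_mod_cast congrArg (Nat.cast (R := ZMod N)) hs
    have e : x = x' + s := by linear_combination hs' - hkk
    refine ⟨x', fun c hc => ?_⟩
    rcases Finset.mem_union.1 hc with hc | hc
    · obtain ⟨r, hr, rfl⟩ := hx c hc
      exact ⟨s + r, by omega, by rw [e]; push_cast; ring⟩
    · obtain ⟨r, hr, rfl⟩ := hx' c hc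
      exact ⟨r, by omega, rfl⟩

theorem HasInDiamLE.union_of_cycDist_le {N l l' γ : ℕ} [NeZero N] {C C' : Finset (ZMod N)}
    (h : HasInDiamLE N l C) (h' : HasInDiamLE N l' C') {k k' : ZMod N} (hk : k ∈ C)
    (hk' : k' ∈ C') (hd : cycDist N k k' ≤ γ) : HasInDiamLE N (l + l' + γ) (C ∪ C') := by
  rcases min_le_iff.1 hd with hd | hd
  · have := h'.union_of_eq_add h hk' hk (t := (k - k').val)
      (by rw [ZMod.natCast_zmod_val]; ring)
    rw [Finset.union_comm]
    exact this.mono (by omega)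
  · exact (h.union_of_eq_add h' hk hk' (t := (k' - k).val)
      (by rw [ZMod.natCast_zmod_val]; ring)).mono (by omega)

/-- The greedy merging process, as an induction on the number `n` of clusters: a partition `P` whose
clusters lie in arcs of lengths `l C` with `∑ l C ≤ γ` yields a valid clustering of `K`
with parameter at most `2 ^ n * γ`. -/
theorem exists_clustering_of_arcs {N : ℕ} [NeZero N] (K : Finset (ZMod N)) (n : ℕ) :
    ∀ (γ : ℕ) (P : Finset (Finset (ZMod N))) (l : Finset (ZMod N) → ℕ), 1 ≤ γ → P.card = n →
      K = P.biUnion id → (∀ C ∈ P, ∀ C' ∈ P, C ≠ C' → Disjoint C C') →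
      (∀ C ∈ P, HasInDiamLE N (l C) C) → ∑ C ∈ P, l C ≤ γ →
      ∃ δ : ℕ, 1 ≤ δ ∧ δ ≤ 2 ^ n * γ ∧
        ∃ P : Finset (Finset (ZMod N)),
          K = P.biUnion id ∧
          (∀ C ∈ P, ∀ C' ∈ P, C ≠ C' → Disjoint C C') ∧
          (∀ C ∈ P, HasInDiamLE N δ C) ∧
          (∀ C ∈ P, ∀ C' ∈ P, C ≠ C' → ∀ k ∈ C, ∀ k' ∈ C', δ < cycDist N k k') := by
  induction n with
  | zero =>
    intro γ P l hγ hn hP hdisj _ _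
    have hP0 : P = ∅ := Finset.card_eq_zero.1 hn
    subst hP0
    exact ⟨γ, hγ, by simp, ∅, hP, by simp, by simp, by simp⟩
  | succ n ih =>
    intro γ P l hγ hn hP hdisj hdiam hsum
    by_cases hsep : ∀ C ∈ P, ∀ C' ∈ P, C ≠ C' → ∀ k ∈ C, ∀ k' ∈ C', γ < cycDist N k k'
    · refine ⟨γ, hγ, Nat.le_mul_of_pos_left _ (by positivity), P, hP, hdisj, fun C hC => ?_, hsep⟩
      exact (hdiam C hC).mono ((Finset.single_le_sum (fun _ _ => Nat.zero_le _) hC).trans hsum)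
    · push Not at hsep
      obtain ⟨C, hC, C', hC', hne, k, hk, k', hk', hd⟩ := hsep
      have hU : C ∪ C' ∉ P := by
        intro hmem
        have h1 : C = C ∪ C' := by
          by_contra h
          exact Finset.disjoint_left.1 (hdisj C hC _ hmem h) hk (Finset.mem_union_left _ hk)
        have h2 : C' = C ∪ C' := by
          by_contra h
          exact Finset.disjoint_left.1 (hdisj C' hC' _ hmem h) hk' (Finset.mem_union_right _ hk')
        exact hne (h1.trans h2.symm)
      -- `Q` consists of the clusters left untouched by the merge.
      obtain ⟨Q, hQ⟩ : ∃ Q, Q = (P.erase C).erase C' := ⟨_, rfl⟩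
      have hC'1 : C' ∈ P.erase C := Finset.mem_erase.2 ⟨hne.symm, hC'⟩
      have hC'Q : C' ∉ Q := by simp [hQ]
      have hCQ : C ∉ insert C' Q := by simp [hQ, hne]
      have hPQ : P = insert C (insert C' Q) := by
        rw [hQ, Finset.insert_erase hC'1, Finset.insert_erase hC]
      have hQP : ∀ D ∈ Q, D ∈ P := fun D hD => by simp [hPQ, hD]
      have hUQ : C ∪ C' ∉ Q := fun h => hU (hQP _ h)
      have hQdisj : ∀ D ∈ Q, Disjoint (C ∪ C') D := fun D hD => by
        rw [Finset.disjoint_union_left]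
        refine ⟨hdisj C hC D (hQP D hD) ?_, hdisj C' hC' D (hQP D hD) ?_⟩
        · rintro rfl
          exact hCQ (Finset.mem_insert_of_mem hD)
        · rintro rfl
          exact hC'Q hD
      have hl : ∀ D ∈ Q, Function.update l (C ∪ C') (l C + l C' + γ) D = l D := fun D hD =>
        Function.update_of_ne (by rintro rfl; exact hUQ hD) _ _
      have hstep := ih (2 * γ) (insert (C ∪ C') Q)
        (Function.update l (C ∪ C') (l C + l C' + γ)) (by omega)
      have hvalid := hstep ?_ ?_ ?_ ?_ ?_
      · obtain ⟨δ, hδ1, hδ, hrest⟩ := hvalid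
        exact ⟨δ, hδ1, by rw [pow_succ, mul_assoc]; exact hδ, hrest⟩
      · rw [hPQ, Finset.card_insert_of_notMem hCQ, Finset.card_insert_of_notMem hC'Q] at hn
        rw [Finset.card_insert_of_notMem hUQ]
        omega
      · rw [hP, hPQ]
        simp [Finset.biUnion_insert, Finset.union_assoc]
      · intro D hD D' hD' hDD
        rcases Finset.mem_insert.1 hD with rfl | hD <;> rcases Finset.mem_insert.1 hD' with rfl | hD'
        · exact absurd rfl hDD
        · exact hQdisj _ hD'
        · exact (hQdisj _ hD).symm
        · exact hdisj _ (hQP _ hD) _ (hQP _ hD') hDD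
      · intro D hD
        rcases Finset.mem_insert.1 hD with rfl | hD
        · rw [Function.update_self]
          exact (hdiam C hC).union_of_cycDist_le (hdiam C' hC') hk hk' hd
        · rw [hl D hD]
          exact hdiam D (hQP D hD)
      · rw [hPQ, Finset.sum_insert hCQ, Finset.sum_insert hC'Q] at hsum
        have hsumQ : ∑ D ∈ Q, Function.update l (C ∪ C') (l C + l C' + γ) D = ∑ D ∈ Q, l D :=
          Finset.sum_congr rfl hl
        rw [Finset.sum_insert hUQ, Function.update_self, hsumQ]
        omega

/-- Any `K ⊆ ℤ/Nℤ` with `|K| < ln(N/2)` admits a valid clustering: a partition into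
clusters of in-diameter at most `γ` that are pairwise at cyclic distance greater
than `γ`, for some `1 ≤ γ < N/2`. -/
theorem small_set_has_valid_clustering (N : ℕ) (hN : 3 ≤ N) (K : Finset (ZMod N))
    (hK : (K.card : ℝ) < Real.log (N / 2)) :
    ∃ γ : ℕ, 1 ≤ γ ∧ 2 * γ < N ∧
      ∃ P : Finset (Finset (ZMod N)),
        K = P.biUnion id ∧
        (∀ C ∈ P, ∀ C' ∈ P, C ≠ C' → Disjoint C C') ∧
        (∀ C ∈ P, HasInDiamLE N γ C) ∧
        (∀ C ∈ P, ∀ C' ∈ P, C ≠ C' → ∀ k ∈ C, ∀ k' ∈ C', γ < cycDist N k k') := by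
  have : NeZero N := ⟨by omega⟩
  have hbound : 2 * 2 ^ K.card < N := by
    have hN0 : (0 : ℝ) < N / 2 := by positivity
    have h1 : Real.exp K.card < N / 2 := (Real.lt_log_iff_exp_lt hN0).1 hK
    have h2 : (2 : ℝ) ^ K.card ≤ Real.exp K.card := by
      rw [← Real.exp_one_pow]
      exact pow_le_pow_left₀ (by norm_num) (by linarith [Real.add_one_le_exp (1 : ℝ)]) _
    have h3 : (2 : ℝ) * 2 ^ K.card < N := by linarith
    exact_mod_cast h3
  have hsingle : ∀ C ∈ K.image fun k => ({k} : Finset (ZMod N)), HasInDiamLE N 0 C := by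
    intro C hC
    obtain ⟨k, -, rfl⟩ := Finset.mem_image.1 hC
    exact ⟨k, fun c hc => ⟨0, le_rfl, by simpa using hc⟩⟩
  obtain ⟨γ, hγ1, hγ, hrest⟩ := exists_clustering_of_arcs K K.card 1
    (K.image fun k => {k}) (fun _ => 0) le_rfl
    (Finset.card_image_of_injective _ Finset.singleton_injective)
    (by ext; simp) (by simp +contextual [eq_comm]) hsingle (by simp)
  exact ⟨γ, hγ1, by omega, hrest⟩
end

section
/- Let N ≥ 3 be an integer and let K ⊆ {0, 1, …, ⌊N/2⌋}. Suppose there exists a finite family of real-valued functions h_i on the vertex angles {θ_1, …, θ_N} of the regular N-gon, each of the form h_i(θ) = Σ_{k∈K} (a_{ik} cos(kθ) + b_{ik} sin(kθ)) with real coefficients a_{ik}, b_{ik}, such that cos(π/N) − cos(θ_j) = Σ_i h_i(θ_j)² for all j = 1, …, N. Then |K| ≥ ln(N/2)/2. -/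
/-!
The proof is by duality. Put `M = N / 2` and suppose `M > exp (2 |K|)`, hence `M > 4 ^ |K|`.

*A gap in the distances* (`exists_scale`). Merging nearby points of `{0} ∪ K ∪ {M}` into clusters
produces a `γ ≥ 1/2` such that no two of these points are at a distance in `(γ, 2γ]`: as long as
some distance lies in that interval, merging two clusters multiplies the bound on the diameters by
at most `4`, and the number of merges is limited by the number of points. Being at distance
at most `2γ` is then an equivalence relation on `K`, and since `M > 4 ^ |K|`, also `2γ < M`.

*A separating functional* (`kernel_cos`). With `g = ⌊2γ⌋`, integrate functions on the vertices
against the Dirichlet kernel `∑_{|p| ≤ g} cos (p θ)`. By orthogonality the functional sends every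
sine to `0` and, up to the factor `N`, sends `cos (m θ)` for `|m| ≤ N` to `1` if `|m| ≤ g`, to `-1`
if `N - |m| ≤ g`, and to `0` otherwise. So it takes the value `N (cos (π / N) - 1) < 0` on
`cos (π / N) - cos θ`.

*Nonnegativity on squares.* For `k, l ∈ K`, the value on `2 cos (k θ) cos (l θ)` is
`[k ~ l] + [k, l near 0] - [k, l near M]`, with the opposite signs on the last two terms for
sines. As the points near `0` and the points near `M` form clusters, these matrices are sums of
all-ones blocks, hence positive semidefinite (`sum_equiv_nonneg`), and the functional is nonnegative
on every square. This contradicts the certificate.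
-/

open Real Finset

/-! ### Clusters -/

/-- The merging process. The fibres of `f` are the current clusters, all of diameter at most `γ`;
merging two clusters at distance at most `2γ` gives one of diameter at most `4γ`. -/
lemma exists_scale_aux (P : Finset ℝ) (c : ℕ) :
    ∀ (f : ℝ → ℝ) (γ : ℝ), 0 < γ → (P.image f).card ≤ c + 1 →
      (∀ x ∈ P, ∀ y ∈ P, f x = f y → |x - y| ≤ γ) →
      ∃ γ', γ ≤ γ' ∧ γ' ≤ γ * 4 ^ c ∧
        ∀ x ∈ P, ∀ y ∈ P, |x - y| ≤ 2 * γ' → |x - y| ≤ γ' := by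
  induction c with
  | zero =>
    intro f γ hγ hc hf
    refine ⟨γ, le_rfl, by simp, fun x hx y hy _ => hf x hx y hy ?_⟩
    exact Finset.card_le_one.mp hc _ (Finset.mem_image_of_mem f hx) _
      (Finset.mem_image_of_mem f hy)
  | succ c ih =>
    intro f γ hγ hc hf
    by_cases h : ∀ x ∈ P, ∀ y ∈ P, |x - y| ≤ 2 * γ → |x - y| ≤ γ
    · refine ⟨γ, le_rfl, ?_, h⟩
      have : (1 : ℝ) ≤ 4 ^ (c + 1) := one_le_pow₀ (by norm_num)
      nlinarith
    push Not at h
    obtain ⟨x, hx, y, hy, hxy, hxy'⟩ := h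
    have hne : f x ≠ f y := fun he => absurd (hf x hx y hy he) (not_le.mpr hxy')
    have hcard : (P.image (fun z => if f z = f y then f x else f z)).card ≤ c + 1 := by
      have hsub : P.image (fun z => if f z = f y then f x else f z) ⊆ (P.image f).erase (f y) := by
        intro w hw
        obtain ⟨z, hz, rfl⟩ := Finset.mem_image.mp hw
        by_cases hzy : f z = f y
        · simp only [hzy, if_true]
          exact Finset.mem_erase.mpr ⟨hne, Finset.mem_image_of_mem f hx⟩
        · simp only [hzy, if_false]
          exact Finset.mem_erase.mpr ⟨hzy, Finset.mem_image_of_mem f hz⟩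
      have := Finset.card_le_card hsub
      rw [Finset.card_erase_of_mem (Finset.mem_image_of_mem f hy)] at this
      omega
    have hdiam : ∀ u ∈ P, ∀ v ∈ P, (if f u = f y then f x else f u) =
        (if f v = f y then f x else f v) → |u - v| ≤ 4 * γ := by
      intro u hu v hv huv
      have key : ∀ u ∈ P, ∀ v ∈ P, f u = f y → f x = f v → |u - v| ≤ 4 * γ := by
        intro u hu v hv h1 h2
        have a1 := abs_le.mp (hf u hu y hy h1)
        have a2 := abs_le.mp (hf x hx v hv h2)
        have a3 := abs_le.mp hxy
        rw [abs_le]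
        constructor <;> linarith [a1.1, a1.2, a2.1, a2.2, a3.1, a3.2]
      split_ifs at huv with c1 c2 c2
      · linarith [hf u hu v hv (c1.trans c2.symm)]
      · exact key u hu v hv c1 huv
      · rw [abs_sub_comm]
        exact key v hv u hu c2 huv.symm
      · linarith [hf u hu v hv huv]
    obtain ⟨γ', h1, h2, h3⟩ := ih _ (4 * γ) (by positivity) hcard hdiam
    refine ⟨γ', by linarith, ?_, h3⟩
    rw [pow_succ]
    linarith

/-- A scale `γ` such that no distance within `P` lies in `(γ, 2γ]`. The first merge joins
singletons, so the diameter after it is at most `1`; this saves a factor `2` in the bound. -/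
lemma exists_scale (P : Finset ℝ) (n : ℕ) (hP : P.card ≤ n + 2) :
    ∃ γ : ℝ, 1 / 2 ≤ γ ∧ γ ≤ 4 ^ n ∧
      ∀ x ∈ P, ∀ y ∈ P, |x - y| ≤ 2 * γ → |x - y| ≤ γ := by
  have h4 : (1 : ℝ) ≤ 4 ^ n := one_le_pow₀ (by norm_num)
  by_cases h : ∀ x ∈ P, ∀ y ∈ P, |x - y| ≤ 2 * (1 / 2 : ℝ) → |x - y| ≤ 1 / 2
  · exact ⟨1 / 2, le_rfl, by linarith, h⟩
  push Not at h
  obtain ⟨x, hx, y, hy, hxy, hxy'⟩ := h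
  have hne : x ≠ y := by
    rintro rfl
    norm_num at hxy'
  have hcard : (P.image (fun z => if z = y then x else z)).card ≤ n + 1 := by
    have hsub : P.image (fun z => if z = y then x else z) ⊆ P.erase y := by
      intro w hw
      obtain ⟨z, hz, rfl⟩ := Finset.mem_image.mp hw
      by_cases hzy : z = y
      · simp only [hzy, if_true]
        exact Finset.mem_erase.mpr ⟨hne, hx⟩
      · simp only [hzy, if_false]
        exact Finset.mem_erase.mpr ⟨hzy, hz⟩
    have := Finset.card_le_card hsub
    rw [Finset.card_erase_of_mem hy] at this
    omega
  have hdiam : ∀ u ∈ P, ∀ v ∈ P, (if u = y then x else u) =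
      (if v = y then x else v) → |u - v| ≤ 1 := by
    intro u hu v hv huv
    split_ifs at huv with c1 c2 c2
    · subst c1 c2; simp
    · subst c1 huv; rw [abs_sub_comm]; linarith
    · subst c2 huv; linarith
    · subst huv; simp
  obtain ⟨γ, h1, h2, h3⟩ := exists_scale_aux P n _ 1 one_pos hcard hdiam
  exact ⟨γ, by linarith, by linarith, h3⟩

/-- The indicator matrix of an equivalence relation is positive semidefinite. -/
lemma sum_equiv_nonneg (K : Finset ℕ) (R : ℕ → ℕ → Prop) [DecidableRel R]
    (hrefl : ∀ k ∈ K, R k k) (hsymm : ∀ k ∈ K, ∀ l ∈ K, R k l → R l k)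
    (htrans : ∀ k ∈ K, ∀ l ∈ K, ∀ p ∈ K, R k l → R l p → R k p) (x : ℕ → ℝ) :
    0 ≤ ∑ k ∈ K, ∑ l ∈ K, x k * x l * (if R k l then 1 else 0) := by
  -- the label of `k` is its equivalence class
  set f : ℕ → Finset ℕ := fun k => K.filter (R k) with hf
  have hR : ∀ k ∈ K, ∀ l ∈ K, (R k l ↔ f k = f l) := by
    intro k hk l hl
    constructor
    · intro h
      ext p
      simp only [hf, Finset.mem_filter]
      exact ⟨fun ⟨hp, h'⟩ => ⟨hp, htrans l hl k hk p hp (hsymm k hk l hl h) h'⟩,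
        fun ⟨hp, h'⟩ => ⟨hp, htrans k hk l hl p hp h h'⟩⟩
    · intro h
      have : l ∈ f l := Finset.mem_filter.mpr ⟨hl, hrefl l hl⟩
      rw [← h] at this
      exact (Finset.mem_filter.mp this).2
  have : ∑ k ∈ K, ∑ l ∈ K, x k * x l * (if R k l then (1 : ℝ) else 0) =
      ∑ c ∈ K.image f, (∑ k ∈ K, if f k = c then x k else 0) ^ 2 := by
    simp_rw [sq, Finset.sum_mul_sum]
    rw [Finset.sum_comm]
    simp_rw [Finset.sum_comm (s := K.image f)]
    rw [Finset.sum_comm]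
    refine Finset.sum_congr rfl fun k hk => Finset.sum_congr rfl fun l hl => ?_
    rw [Finset.sum_eq_single_of_mem (f k) (Finset.mem_image_of_mem f hk)]
    · by_cases h : f k = f l
      · simp [(hR k hk l hl).mpr h, h]
      · simp [mt (hR k hk l hl).mp h, Ne.symm h]
    · intro c _ hc
      simp [Ne.symm hc]
  rw [this]
  positivity

/-! ### Orthogonality and the Dirichlet kernel -/

/-- The angle of the `j`-th vertex of the regular `N`-gon. -/
noncomputable def vertexAngle (N j : ℕ) : ℝ := (2 * (j : ℝ) - 1) * π / N

/-- The Dirichlet kernel `∑_{|p| ≤ g} cos (p θ)`. -/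
noncomputable def dirichletKernel (g : ℤ) (θ : ℝ) : ℝ :=
  ∑ p ∈ Finset.Icc (-g) g, Real.cos ((p : ℝ) * θ)

/-- Telescoping after multiplication by `2 sin α`. -/
lemma two_sin_mul_sum_cos (α : ℝ) (n : ℕ) :
    2 * Real.sin α * ∑ j ∈ Finset.Icc 1 n, Real.cos ((2 * (j : ℝ) - 1) * α) =
      Real.sin (2 * n * α) := by
  induction n with
  | zero => simp
  | succ n ih =>
    rw [Finset.sum_Icc_succ_top (by omega), mul_add, ih]
    have e1 : 2 * (n : ℝ) * α = (2 * ((n + 1 : ℕ) : ℝ) - 1) * α - α := by push_cast; ring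
    have e2 : 2 * ((n + 1 : ℕ) : ℝ) * α = (2 * ((n + 1 : ℕ) : ℝ) - 1) * α + α := by ring
    rw [e1, e2, Real.sin_sub, Real.sin_add]
    ring

lemma two_sin_mul_sum_sin (α : ℝ) (n : ℕ) :
    2 * Real.sin α * ∑ j ∈ Finset.Icc 1 n, Real.sin ((2 * (j : ℝ) - 1) * α) =
      1 - Real.cos (2 * n * α) := by
  induction n with
  | zero => simp
  | succ n ih =>
    rw [Finset.sum_Icc_succ_top (by omega), mul_add, ih]
    have e1 : 2 * (n : ℝ) * α = (2 * ((n + 1 : ℕ) : ℝ) - 1) * α - α := by push_cast; ring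
    have e2 : 2 * ((n + 1 : ℕ) : ℝ) * α = (2 * ((n + 1 : ℕ) : ℝ) - 1) * α + α := by ring
    rw [e1, e2, Real.cos_sub, Real.cos_add]
    ring

lemma sum_sin_vertex (N : ℕ) (hN : 3 ≤ N) (m : ℤ) :
    ∑ j ∈ Finset.Icc 1 N, Real.sin (m * vertexAngle N j) = 0 := by
  have hN0 : (N : ℝ) ≠ 0 := by positivity
  have e : ∀ j : ℕ, (m : ℝ) * vertexAngle N j = (2 * (j : ℝ) - 1) * (m * π / N) := by
    intro j; unfold vertexAngle; ring
  simp_rw [e]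
  have h := two_sin_mul_sum_sin (m * π / N) N
  have e2 : 2 * (N : ℝ) * (m * π / N) = m * (2 * π) := by field_simp
  rw [e2, Real.cos_int_mul_two_pi, sub_self] at h
  by_cases hs : Real.sin (m * π / N) = 0
  · obtain ⟨q, hq⟩ := Real.sin_eq_zero_iff.mp hs
    refine Finset.sum_eq_zero fun j _ => ?_
    rw [← hq]
    have : (2 * (j : ℝ) - 1) * (q * π) = (((2 * j - 1) * q : ℤ) : ℝ) * π := by push_cast; ring
    rw [this, Real.sin_int_mul_pi]
  · simpa [hs] using h

lemma sum_cos_vertex (N : ℕ) (hN : 3 ≤ N) (m : ℤ) (hm : |m| < 2 * N) :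
    ∑ j ∈ Finset.Icc 1 N, Real.cos (m * vertexAngle N j) =
      N * ((if m = 0 then 1 else 0) - (if m = N then 1 else 0) - (if m = -N then 1 else 0)) := by
  have hN0 : (N : ℝ) ≠ 0 := by positivity
  have hNz : (N : ℤ) ≠ 0 := by omega
  have e : ∀ j : ℕ, (m : ℝ) * vertexAngle N j = (2 * (j : ℝ) - 1) * (m * π / N) := by
    intro j; unfold vertexAngle; ring
  have hodd : ∀ j : ℕ, Real.cos ((2 * (j : ℝ) - 1) * π) = -1 := by
    intro j
    have : (2 * (j : ℝ) - 1) * π = (j : ℝ) * (2 * π) - π := by ring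
    rw [this, Real.cos_sub_pi, Real.cos_nat_mul_two_pi]
  rcases eq_or_ne m 0 with rfl | h0
  · rw [if_pos rfl, if_neg (by omega), if_neg (by omega)]
    simp
  rcases eq_or_ne m N with rfl | h1
  · rw [if_neg hNz, if_pos rfl, if_neg (by omega)]
    have : ∀ j : ℕ, ((N : ℤ) : ℝ) * vertexAngle N j = (2 * (j : ℝ) - 1) * π := by
      intro j; unfold vertexAngle; push_cast; field_simp
    simp_rw [this, hodd]
    simp
  rcases eq_or_ne m (-N) with rfl | h2
  · rw [if_neg h0, if_neg h1, if_pos rfl]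
    have : ∀ j : ℕ, ((-(N : ℤ) : ℤ) : ℝ) * vertexAngle N j = -((2 * (j : ℝ) - 1) * π) := by
      intro j; unfold vertexAngle; push_cast; field_simp
    simp_rw [this, Real.cos_neg, hodd]
    simp
  rw [if_neg h0, if_neg h1, if_neg h2]
  simp_rw [e]
  have h := two_sin_mul_sum_cos (m * π / N) N
  have e2 : 2 * (N : ℝ) * (m * π / N) = ((2 * m : ℤ) : ℝ) * π := by push_cast; field_simp
  rw [e2, Real.sin_int_mul_pi] at h
  have hs : Real.sin (m * π / N) ≠ 0 := by
    intro hs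
    obtain ⟨q, hq⟩ := Real.sin_eq_zero_iff.mp hs
    have hq' : (q : ℝ) * N = m := by
      have := Real.pi_ne_zero
      field_simp at hq
      linarith
    have hq'' : q * (N : ℤ) = m := by exact_mod_cast hq'
    rw [← hq'', abs_mul, Nat.abs_cast] at hm
    have hq2 : |q| < 2 := by nlinarith
    rw [abs_lt] at hq2
    have : q = -1 ∨ q = 0 ∨ q = 1 := by omega
    rcases this with rfl | rfl | rfl
    · apply h2; linarith
    · apply h0; linarith
    · apply h1; linarith
  simpa [hs] using h

lemma kernel_sin (N : ℕ) (hN : 3 ≤ N) (g m : ℤ) :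
    ∑ j ∈ Finset.Icc 1 N, dirichletKernel g (vertexAngle N j) *
      Real.sin (m * vertexAngle N j) = 0 := by
  unfold dirichletKernel
  simp_rw [Finset.sum_mul]
  rw [Finset.sum_comm]
  refine Finset.sum_eq_zero fun p _ => ?_
  have : ∀ θ : ℝ, Real.cos (p * θ) * Real.sin (m * θ) =
      (1 / 2) * (Real.sin (((m + p : ℤ) : ℝ) * θ) + Real.sin (((m - p : ℤ) : ℝ) * θ)) := by
    intro θ
    push_cast
    rw [add_mul, sub_mul, Real.sin_add, Real.sin_sub]
    ring
  simp_rw [this]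
  rw [← Finset.mul_sum, Finset.sum_add_distrib, sum_sin_vertex N hN, sum_sin_vertex N hN]
  simp

/-- The functional given by the Dirichlet kernel, evaluated at `cos (m θ)`: frequencies congruent
to `0` modulo `N` up to `g` survive, with a sign `-1` for those close to `±N`, because
`cos (N θ) = -1` at the vertices. -/
lemma kernel_cos (N : ℕ) (hN : 3 ≤ N) (g m : ℤ) (hg0 : 0 ≤ g) (hg : 2 * g < N) (hm : |m| ≤ N) :
    ∑ j ∈ Finset.Icc 1 N, dirichletKernel g (vertexAngle N j) * Real.cos (m * vertexAngle N j) =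
      N * ((if |m| ≤ g then 1 else 0) - (if N - |m| ≤ g then 1 else 0)) := by
  unfold dirichletKernel
  simp_rw [Finset.sum_mul]
  rw [Finset.sum_comm]
  have hm' := abs_le.mp hm
  have : ∀ p : ℤ, ∀ θ : ℝ, Real.cos (p * θ) * Real.cos (m * θ) =
      (1 / 2) * (Real.cos (((m + p : ℤ) : ℝ) * θ) + Real.cos (((m - p : ℤ) : ℝ) * θ)) := by
    intro p θ
    push_cast
    rw [add_mul, sub_mul, Real.cos_add, Real.cos_sub]
    ring
  simp_rw [this]
  have step : ∀ p ∈ Finset.Icc (-g) g,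
      ∑ j ∈ Finset.Icc 1 N, (1 / 2) * (Real.cos (((m + p : ℤ) : ℝ) * vertexAngle N j) +
        Real.cos (((m - p : ℤ) : ℝ) * vertexAngle N j)) =
      (N / 2 : ℝ) * (((if p = -m then 1 else 0) - (if p = N - m then 1 else 0)
          - (if p = -N - m then 1 else 0)) +
        ((if p = m then 1 else 0) - (if p = m - N then 1 else 0)
          - (if p = m + N then 1 else 0))) := by
    intro p hp
    have hp' := Finset.mem_Icc.mp hp
    rw [← Finset.mul_sum, Finset.sum_add_distrib,
      sum_cos_vertex N hN _ (abs_lt.mpr (by constructor <;> omega)),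
      sum_cos_vertex N hN _ (abs_lt.mpr (by constructor <;> omega))]
    have q1 : (m + p = 0) = (p = -m) := propext (by omega)
    have q2 : (m + p = N) = (p = N - m) := propext (by omega)
    have q3 : (m + p = -N) = (p = -N - m) := propext (by omega)
    have q4 : (m - p = 0) = (p = m) := propext (by omega)
    have q5 : (m - p = N) = (p = m - N) := propext (by omega)
    have q6 : (m - p = -N) = (p = m + N) := propext (by omega)
    simp only [q1, q2, q3, q4, q5, q6]
    ring
  rw [Finset.sum_congr rfl step, ← Finset.mul_sum]
  simp only [Finset.sum_add_distrib, Finset.sum_sub_distrib, Finset.sum_ite_eq', Finset.mem_Icc]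
  have r1 : (-g ≤ -m ∧ -m ≤ g) = (|m| ≤ g) := propext (by rw [abs_le]; omega)
  have r4 : (-g ≤ m ∧ m ≤ g) = (|m| ≤ g) := propext (by rw [abs_le])
  rw [if_congr (iff_of_eq r1) rfl rfl, if_congr (iff_of_eq r4) rfl rfl]
  rcases le_total 0 m with h | h
  · rw [abs_of_nonneg h]
    by_cases hh : (N : ℤ) - m ≤ g
    · rw [if_pos (by omega : -g ≤ (N : ℤ) - m ∧ (N : ℤ) - m ≤ g),
        if_neg (by omega : ¬ (-g ≤ -(N : ℤ) - m ∧ -(N : ℤ) - m ≤ g)),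
        if_pos (by omega : -g ≤ m - (N : ℤ) ∧ m - (N : ℤ) ≤ g),
        if_neg (by omega : ¬ (-g ≤ m + (N : ℤ) ∧ m + (N : ℤ) ≤ g)), if_pos hh]
      ring
    · rw [if_neg (by omega : ¬ (-g ≤ (N : ℤ) - m ∧ (N : ℤ) - m ≤ g)),
        if_neg (by omega : ¬ (-g ≤ -(N : ℤ) - m ∧ -(N : ℤ) - m ≤ g)),
        if_neg (by omega : ¬ (-g ≤ m - (N : ℤ) ∧ m - (N : ℤ) ≤ g)),
        if_neg (by omega : ¬ (-g ≤ m + (N : ℤ) ∧ m + (N : ℤ) ≤ g)), if_neg hh]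
      ring
  · rw [abs_of_nonpos h]
    by_cases hh : (N : ℤ) - -m ≤ g
    · rw [if_neg (by omega : ¬ (-g ≤ (N : ℤ) - m ∧ (N : ℤ) - m ≤ g)),
        if_pos (by omega : (-g ≤ -(N : ℤ) - m ∧ -(N : ℤ) - m ≤ g)),
        if_neg (by omega : ¬ (-g ≤ m - (N : ℤ) ∧ m - (N : ℤ) ≤ g)),
        if_pos (by omega : (-g ≤ m + (N : ℤ) ∧ m + (N : ℤ) ≤ g)), if_pos hh]
      ring
    · rw [if_neg (by omega : ¬ (-g ≤ (N : ℤ) - m ∧ (N : ℤ) - m ≤ g)),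
        if_neg (by omega : ¬ (-g ≤ -(N : ℤ) - m ∧ -(N : ℤ) - m ≤ g)),
        if_neg (by omega : ¬ (-g ≤ m - (N : ℤ) ∧ m - (N : ℤ) ≤ g)),
        if_neg (by omega : ¬ (-g ≤ m + (N : ℤ) ∧ m + (N : ℤ) ≤ g)), if_neg hh]
      ring

/-! ### Nonnegativity on squares -/

/-- The functional is nonnegative on squares, given the gap in the distances. -/
lemma kernel_sq_nonneg (N : ℕ) (hN : 3 ≤ N) (K : Finset ℕ)
    (hK : K ⊆ Finset.range (N / 2 + 1)) (γ : ℝ) (hγ : 1 / 2 ≤ γ) (hγN : 2 * γ < N / 2)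
    (hgap : ∀ k ∈ K, ∀ l ∈ K, |(k : ℝ) - l| ≤ 2 * γ → |(k : ℝ) - l| ≤ γ)
    (hgap0 : ∀ k ∈ K, (k : ℝ) ≤ 2 * γ → (k : ℝ) ≤ γ)
    (hgapM : ∀ k ∈ K, (N : ℝ) / 2 - k ≤ 2 * γ → (N : ℝ) / 2 - k ≤ γ)
    (a b : ℕ → ℝ) :
    0 ≤ ∑ j ∈ Finset.Icc 1 N, dirichletKernel ⌊2 * γ⌋ (vertexAngle N j) *
      (∑ k ∈ K, (a k * Real.cos (k * vertexAngle N j) +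
        b k * Real.sin (k * vertexAngle N j))) ^ 2 := by
  classical
  set g : ℤ := ⌊2 * γ⌋ with hgdef
  have hg0 : 0 ≤ g := Int.floor_nonneg.mpr (by linarith)
  have hgle : (g : ℝ) ≤ 2 * γ := Int.floor_le _
  have hgN : 2 * g < N := by
    have : (2 * g : ℝ) < N := by linarith
    exact_mod_cast this
  have hkN : ∀ k ∈ K, (k : ℝ) ≤ N / 2 := by
    intro k hk
    have h1 := Finset.mem_range.mp (hK hk)
    have h2 : 2 * k ≤ N := by omega
    have h3 : (2 * k : ℝ) ≤ N := by exact_mod_cast h2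
    linarith
  have hfl : ∀ z : ℤ, z ≤ g ↔ (z : ℝ) ≤ 2 * γ := fun z => Int.le_floor
  -- the clusters around `0` and around `N / 2`
  set A : ℕ → ℝ := fun k => if (k : ℝ) ≤ γ then 1 else 0 with hA
  set B : ℕ → ℝ := fun k => if (N : ℝ) / 2 - k ≤ γ then 1 else 0 with hB
  set E : ℕ → ℕ → ℝ := fun k l => if |(k : ℝ) - l| ≤ γ then 1 else 0 with hE
  have hdiff : ∀ k ∈ K, ∀ l ∈ K, ∑ j ∈ Finset.Icc 1 N, dirichletKernel g (vertexAngle N j) *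
      Real.cos (((k - l : ℤ) : ℝ) * vertexAngle N j) = N * E k l := by
    intro k hk l hl
    have h1 := Finset.mem_range.mp (hK hk)
    have h2 := Finset.mem_range.mp (hK hl)
    have hb : 2 * |(k : ℤ) - l| ≤ N := by
      rcases abs_cases ((k : ℤ) - l) with h | h <;> omega
    rw [kernel_cos N hN g _ hg0 hgN (by omega), if_neg (by omega : ¬ (N : ℤ) - |(k : ℤ) - l| ≤ g)]
    have : (|(k : ℤ) - l| ≤ g) ↔ |(k : ℝ) - l| ≤ γ := by
      rw [hfl]
      push_cast
      exact ⟨hgap k hk l hl, fun h => by linarith⟩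
    rw [if_congr this rfl rfl, sub_zero]
  have hsum : ∀ k ∈ K, ∀ l ∈ K, ∑ j ∈ Finset.Icc 1 N, dirichletKernel g (vertexAngle N j) *
      Real.cos (((k + l : ℤ) : ℝ) * vertexAngle N j) = N * (A k * A l - B k * B l) := by
    intro k hk l hl
    have h1 := Finset.mem_range.mp (hK hk)
    have h2 := Finset.mem_range.mp (hK hl)
    have h1' := hkN k hk
    have h2' := hkN l hl
    have k0 : (0 : ℝ) ≤ k := by positivity
    have l0 : (0 : ℝ) ≤ l := by positivity
    have habs : |(k : ℤ) + l| = k + l := abs_of_nonneg (by positivity)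
    rw [kernel_cos N hN g _ hg0 hgN (by rw [habs]; omega), habs]
    have e1 : ((k : ℤ) + l ≤ g) ↔ ((k : ℝ) ≤ γ ∧ (l : ℝ) ≤ γ) := by
      rw [hfl]
      push_cast
      exact ⟨fun h => ⟨hgap0 k hk (by linarith), hgap0 l hl (by linarith)⟩,
        fun h => by linarith [h.1, h.2]⟩
    have e2 : ((N : ℤ) - (k + l) ≤ g) ↔ ((N : ℝ) / 2 - k ≤ γ ∧ (N : ℝ) / 2 - l ≤ γ) := by
      rw [hfl]
      push_cast
      exact ⟨fun h => ⟨hgapM k hk (by linarith), hgapM l hl (by linarith)⟩,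
        fun h => by linarith [h.1, h.2]⟩
    rw [if_congr e1 rfl rfl, if_congr e2 rfl rfl]
    simp only [hA, hB, ite_and, mul_ite, mul_one, mul_zero]
    congr 2 <;> split_ifs <;> rfl
  -- the functional on products, obtained from the product-to-sum formulas
  have hcc : ∀ k ∈ K, ∀ l ∈ K, ∑ j ∈ Finset.Icc 1 N, dirichletKernel g (vertexAngle N j) *
      (Real.cos (k * vertexAngle N j) * Real.cos (l * vertexAngle N j)) =
      N / 2 * (E k l + A k * A l - B k * B l) := by
    intro k hk l hl
    have := congrArg₂ (· + ·) (hdiff k hk l hl) (hsum k hk l hl)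
    simp only [← Finset.sum_add_distrib] at this
    have e : ∀ j : ℕ, dirichletKernel g (vertexAngle N j) *
      (Real.cos (k * vertexAngle N j) * Real.cos (l * vertexAngle N j)) = 1 / 2 *
      (dirichletKernel g (vertexAngle N j) * Real.cos (((k - l : ℤ) : ℝ) * vertexAngle N j) +
       dirichletKernel g (vertexAngle N j) * Real.cos (((k + l : ℤ) : ℝ) * vertexAngle N j)) := by
      intro j
      push_cast
      rw [add_mul, sub_mul, Real.cos_add, Real.cos_sub]
      ring
    simp_rw [e]
    rw [← Finset.mul_sum, this]
    ring
  have hss : ∀ k ∈ K, ∀ l ∈ K, ∑ j ∈ Finset.Icc 1 N, dirichletKernel g (vertexAngle N j) *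
      (Real.sin (k * vertexAngle N j) * Real.sin (l * vertexAngle N j)) =
      N / 2 * (E k l - A k * A l + B k * B l) := by
    intro k hk l hl
    have := congrArg₂ (· - ·) (hdiff k hk l hl) (hsum k hk l hl)
    simp only [← Finset.sum_sub_distrib] at this
    have e : ∀ j : ℕ, dirichletKernel g (vertexAngle N j) *
      (Real.sin (k * vertexAngle N j) * Real.sin (l * vertexAngle N j)) = 1 / 2 *
      (dirichletKernel g (vertexAngle N j) * Real.cos (((k - l : ℤ) : ℝ) * vertexAngle N j) -
       dirichletKernel g (vertexAngle N j) * Real.cos (((k + l : ℤ) : ℝ) * vertexAngle N j)) := by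
      intro j
      push_cast
      rw [add_mul, sub_mul, Real.cos_add, Real.cos_sub]
      ring
    simp_rw [e]
    rw [← Finset.mul_sum, this]
    ring
  have hcs : ∀ k l : ℕ, ∑ j ∈ Finset.Icc 1 N, dirichletKernel g (vertexAngle N j) *
      (Real.cos (k * vertexAngle N j) * Real.sin (l * vertexAngle N j)) = 0 := by
    intro k l
    have := congrArg₂ (· - ·) (kernel_sin N hN g (k + l)) (kernel_sin N hN g (k - l))
    simp only [← Finset.sum_sub_distrib] at this
    have e : ∀ j : ℕ, dirichletKernel g (vertexAngle N j) *
      (Real.cos (k * vertexAngle N j) * Real.sin (l * vertexAngle N j)) = 1 / 2 *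
      (dirichletKernel g (vertexAngle N j) * Real.sin (((k + l : ℤ) : ℝ) * vertexAngle N j) -
       dirichletKernel g (vertexAngle N j) * Real.sin (((k - l : ℤ) : ℝ) * vertexAngle N j)) := by
      intro j
      push_cast
      rw [add_mul, sub_mul, Real.sin_add, Real.sin_sub]
      ring
    simp_rw [e]
    rw [← Finset.mul_sum, this]
    ring
  -- being close is an equivalence relation, and the two extreme clusters are classes of it
  have hEpsd : ∀ x : ℕ → ℝ, 0 ≤ ∑ k ∈ K, ∑ l ∈ K, x k * x l * E k l := by
    intro x
    refine sum_equiv_nonneg K (fun k l => |(k : ℝ) - l| ≤ γ) ?_ ?_ ?_ x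
    · intro k _
      simp only [sub_self, abs_zero]
      linarith
    · intro k _ l _ h
      rwa [abs_sub_comm]
    · intro k hk l hl p hp h1 h2
      apply hgap k hk p hp
      linarith [abs_sub_le (k : ℝ) l p]
  have hEA : ∀ k ∈ K, ∀ l ∈ K, E k l - A k * A l = (1 - A k) * (1 - A l) * E k l := by
    intro k hk l hl
    have k0 : (0 : ℝ) ≤ k := by positivity
    have l0 : (0 : ℝ) ≤ l := by positivity
    simp only [hE, hA]
    split_ifs with c1 c2 c3 c3 c2 c3 c3 <;> norm_num
    · rw [abs_le] at c1
      exact c3 (hgap0 l hl (by linarith [c1.1]))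
    · rw [abs_le] at c1
      exact c2 (hgap0 k hk (by linarith [c1.2]))
    · exact c1 (abs_le.mpr ⟨by linarith, by linarith⟩)
  have hEB : ∀ k ∈ K, ∀ l ∈ K, E k l - B k * B l = (1 - B k) * (1 - B l) * E k l := by
    intro k hk l hl
    have k0 := hkN k hk
    have l0 := hkN l hl
    simp only [hE, hB]
    split_ifs with c1 c2 c3 c3 c2 c3 c3 <;> norm_num
    · rw [abs_le] at c1
      exact c3 (hgapM l hl (by linarith [c1.2]))
    · rw [abs_le] at c1
      exact c2 (hgapM k hk (by linarith [c1.1]))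
    · exact c1 (abs_le.mpr ⟨by linarith, by linarith⟩)
  have hexp : ∑ j ∈ Finset.Icc 1 N, dirichletKernel g (vertexAngle N j) *
      (∑ k ∈ K, (a k * Real.cos (k * vertexAngle N j) +
        b k * Real.sin (k * vertexAngle N j))) ^ 2 =
      ∑ k ∈ K, ∑ l ∈ K, (a k * a l * (N / 2 * (E k l + A k * A l - B k * B l)) +
        b k * b l * (N / 2 * (E k l - A k * A l + B k * B l))) := by
    simp_rw [sq, Finset.sum_mul_sum, Finset.mul_sum]
    rw [Finset.sum_comm]
    refine Finset.sum_congr rfl fun k hk => ?_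
    rw [Finset.sum_comm]
    refine Finset.sum_congr rfl fun l hl => ?_
    have e : ∀ j : ℕ, dirichletKernel g (vertexAngle N j) *
        ((a k * Real.cos (k * vertexAngle N j) + b k * Real.sin (k * vertexAngle N j)) *
        (a l * Real.cos (l * vertexAngle N j) + b l * Real.sin (l * vertexAngle N j))) =
        a k * a l * (dirichletKernel g (vertexAngle N j) *
          (Real.cos (k * vertexAngle N j) * Real.cos (l * vertexAngle N j))) +
        b k * b l * (dirichletKernel g (vertexAngle N j) *
          (Real.sin (k * vertexAngle N j) * Real.sin (l * vertexAngle N j))) +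
        a k * b l * (dirichletKernel g (vertexAngle N j) *
          (Real.cos (k * vertexAngle N j) * Real.sin (l * vertexAngle N j))) +
        b k * a l * (dirichletKernel g (vertexAngle N j) *
          (Real.cos (l * vertexAngle N j) * Real.sin (k * vertexAngle N j))) := by
      intro j; ring
    simp_rw [e]
    simp only [Finset.sum_add_distrib, ← Finset.mul_sum]
    rw [hcc k hk l hl, hss k hk l hl, hcs, hcs]
    ring
  have hfin : ∑ k ∈ K, ∑ l ∈ K, (a k * a l * (N / 2 * (E k l + A k * A l - B k * B l)) +
        b k * b l * (N / 2 * (E k l - A k * A l + B k * B l))) =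
      (N / 2 : ℝ) * ((∑ k ∈ K, ∑ l ∈ K, (a k * (1 - B k)) * (a l * (1 - B l)) * E k l) +
        (∑ k ∈ K, a k * A k) ^ 2 +
        (∑ k ∈ K, ∑ l ∈ K, (b k * (1 - A k)) * (b l * (1 - A l)) * E k l) +
        (∑ k ∈ K, b k * B k) ^ 2) := by
    simp_rw [sq, Finset.sum_mul_sum, ← Finset.sum_add_distrib, Finset.mul_sum]
    refine Finset.sum_congr rfl fun k hk => Finset.sum_congr rfl fun l hl => ?_
    linear_combination (N / 2 : ℝ) * a k * a l * hEB k hk l hl +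
      (N / 2 : ℝ) * b k * b l * hEA k hk l hl
  rw [hexp, hfin]
  have p1 := hEpsd (fun k => a k * (1 - B k))
  have p2 := hEpsd (fun k => b k * (1 - A k))
  have p3 := sq_nonneg (∑ k ∈ K, a k * A k)
  have p4 := sq_nonneg (∑ k ∈ K, b k * B k)
  exact mul_nonneg (by positivity) (by linarith)

/-- Any real sum-of-squares certificate for the facet `cos(π/N) − x` of the regular
`N`-gon using functions with frequencies in `K ⊆ {0, …, ⌊N/2⌋}` requires
`|K| ≥ ln(N/2)/2`. -/
theorem real_sos_frequencies_lb (N : ℕ) (hN : 3 ≤ N) (K : Finset ℕ)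
    (hK : K ⊆ Finset.range (N / 2 + 1))
    (m : ℕ) (a b : Fin m → ℕ → ℝ)
    (hcert : ∀ j ∈ Finset.Icc (1:ℕ) N,
      Real.cos (π / N) - Real.cos ((2 * (j : ℝ) - 1) * π / N) =
        ∑ i, (∑ k ∈ K,
          (a i k * Real.cos (k * ((2 * (j : ℝ) - 1) * π / N)) +
           b i k * Real.sin (k * ((2 * (j : ℝ) - 1) * π / N)))) ^ 2) :
    Real.log (N / 2) / 2 ≤ (K.card : ℝ) := by
  by_contra hcon
  push Not at hcon
  have hNr : (3 : ℝ) ≤ N := by exact_mod_cast hN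
  have hbig : (4 : ℝ) ^ K.card < N / 2 := by
    have h1 : (2 : ℝ) * K.card < Real.log (N / 2) := by linarith
    have h2 := (Real.lt_log_iff_exp_lt (by linarith : (0 : ℝ) < N / 2)).mp h1
    refine lt_of_le_of_lt ?_ h2
    have h3 : Real.exp (2 * (K.card : ℝ)) = (Real.exp 1 ^ 2) ^ K.card := by
      rw [← Real.exp_nat_mul, ← Real.exp_nat_mul]
      congr 1
      push_cast
      ring
    rw [h3]
    have h4 : (2 : ℝ) ≤ Real.exp 1 := by linarith [Real.add_one_le_exp (1 : ℝ)]
    exact pow_le_pow_left₀ (by norm_num) (by nlinarith) _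
  set P : Finset ℝ := insert 0 (insert ((N : ℝ) / 2) (K.image (fun k : ℕ => (k : ℝ)))) with hP
  have hPcard : P.card ≤ K.card + 2 := by
    have h1 := Finset.card_insert_le (0 : ℝ) (insert ((N : ℝ) / 2) (K.image (fun k : ℕ => (k : ℝ))))
    have h2 := Finset.card_insert_le ((N : ℝ) / 2) (K.image (fun k : ℕ => (k : ℝ)))
    have h3 : (K.image (fun k : ℕ => (k : ℝ))).card ≤ K.card := Finset.card_image_le
    rw [hP]
    omega
  obtain ⟨γ, hγ, hγ4, hgap⟩ := exists_scale P K.card hPcard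
  have m0 : (0 : ℝ) ∈ P := by simp [hP]
  have mM : (N : ℝ) / 2 ∈ P := by simp [hP]
  have mK : ∀ k ∈ K, (k : ℝ) ∈ P := fun k hk => by simp [hP, hk]
  have hγN : 2 * γ < N / 2 := by
    by_contra h
    have := hgap _ mM _ m0
    rw [sub_zero, abs_of_nonneg (by positivity)] at this
    linarith [this (not_lt.mp h)]
  have hsq := fun i => kernel_sq_nonneg N hN K hK γ hγ hγN
    (fun k hk l hl => hgap _ (mK k hk) _ (mK l hl))
    (fun k hk => by simpa using hgap _ (mK k hk) _ m0)
    (fun k hk => by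
      have h1 := Finset.mem_range.mp (hK hk)
      have h2 : 2 * k ≤ N := by omega
      have h3 : (2 * k : ℝ) ≤ N := by exact_mod_cast h2
      have := hgap _ mM _ (mK k hk)
      rwa [abs_of_nonneg (by linarith)] at this)
    (a i) (b i)
  have hnonneg := Finset.sum_nonneg (fun i (_ : i ∈ (Finset.univ : Finset (Fin m))) => hsq i)
  rw [Finset.sum_comm] at hnonneg
  simp_rw [← Finset.mul_sum] at hnonneg
  rw [Finset.sum_congr rfl (fun j hj => by
    unfold vertexAngle
    rw [← hcert j hj] :
    ∀ j ∈ Finset.Icc 1 N, _ = dirichletKernel ⌊2 * γ⌋ (vertexAngle N j) *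
      (Real.cos (π / N) - Real.cos (vertexAngle N j)))] at hnonneg
  have hg1 : 1 ≤ ⌊2 * γ⌋ := Int.le_floor.mpr (by push_cast; linarith)
  have hgN : 2 * ⌊2 * γ⌋ < N := by
    have : (2 * ⌊2 * γ⌋ : ℝ) < N := by linarith [Int.floor_le (2 * γ)]
    exact_mod_cast this
  have c0 := kernel_cos N hN ⌊2 * γ⌋ 0 (by omega) hgN (by simp)
  have c1 := kernel_cos N hN ⌊2 * γ⌋ 1 (by omega) hgN (by rw [abs_one]; omega)
  rw [abs_zero, if_pos (by omega), if_neg (by omega)] at c0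
  rw [abs_one, if_pos hg1, if_neg (by omega)] at c1
  simp only [Int.cast_zero, zero_mul, Real.cos_zero, mul_one, Int.cast_one, one_mul,
    sub_zero] at c0 c1
  simp_rw [mul_sub] at hnonneg
  rw [Finset.sum_sub_distrib, ← Finset.sum_mul, c0, c1] at hnonneg
  have hcos : Real.cos (π / N) < 1 := by
    have hpos : 0 < π / N := by positivity
    have hle : π / N ≤ π := div_le_self Real.pi_pos.le (by linarith)
    have := Real.cos_lt_cos_of_nonneg_of_le_pi le_rfl hle hpos
    rwa [Real.cos_zero] at this
  nlinarith
end
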